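/- arXiv:2406.15850 — 6 statements merged into one kernel-verified Lean document; each statement's English description precedes it below -/
import Mathlib

section
/- Suppose for each o ∈ O there is a Markov kernel T̃_o : Z → P(S) such that T_o(s) = T̃_o(φ(s)) for every s ∈ S (i.e., φ is dynamics-preserving), and define abstract kernels T̄_o(z) := (T̃_o z).map φ ∈ P(Z). Then there exist an initial grounding G₀ : Z → P(S) and a transition grounding G : Z × O × Z → P(S) such that: (i) p₀ = (p₀.map φ).bind G₀ and G₀(z)(φ⁻¹{z}) = 1 for (p₀.map φ)-almost every z; (ii) for every z ∈ Z and o ∈ O, T̃_o(z) = ∫ G(z, o, z') d(T̄_o z)(z') and G(z, o, z')(φ⁻¹{z'}) = 1 for (T̄_o z)-almost every z'; and (iii) for every horizon t ≥ 0 and every option sequence (o₀, …, o_{t−1}), the grounded simulated distribution equals the ground future-state distribution: B̄_t(o₀, …, o_{t−1}) = B_t(o₀, …, o_{t−1}). -/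
open MeasureTheory ProbabilityTheory

/-- The ground future-state distribution `B_t(o₀, …, o_{t−1})`: the law of `(S₀, …, S_t)` of the
Markov chain with `S₀ ~ p₀` and `S_{i+1} ~ T_{o_i}(S_i)`. -/
noncomputable def groundLaw {S O : Type*} [MeasurableSpace S]
    (p₀ : Measure S) (T : O → Kernel S S) :
    (t : ℕ) → (Fin t → O) → Measure (Fin (t + 1) → S)
  | 0, _ => p₀.map (fun s => fun _ => s)
  | t + 1, os =>
      (groundLaw p₀ T t (fun i => os i.castSucc)).bind fun traj =>
        (T (os (Fin.last t)) (traj (Fin.last t))).map (fun s' => Fin.snoc traj s')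

/-- The joint law of the simulated abstract trajectory `(Z₀, …, Z_t)` and its grounding
`(S₀, …, S_t)`: `Z₀ ~ p₀.map φ`, `S₀ ~ G₀(Z₀)`, `Z_{i+1} ~ T̄_{o_i}(Z_i)`,
`S_{i+1} ~ G(Z_i, o_i, Z_{i+1})`, each draw conditionally independent of the past given the
indicated variables. -/
noncomputable def simLaw {S Z O : Type*} [MeasurableSpace S] [MeasurableSpace Z]
    [MeasurableSpace O]
    (p₀ : Measure S) (φ : S → Z) (Tbar : O → Kernel Z Z)
    (G₀ : Kernel Z S) (G : Kernel (Z × O × Z) S) :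
    (t : ℕ) → (Fin t → O) → Measure ((Fin (t + 1) → S) × (Fin (t + 1) → Z))
  | 0, _ =>
      (p₀.map φ).bind fun z => (G₀ z).map (fun s => (fun _ => s, fun _ => z))
  | t + 1, os =>
      (simLaw p₀ φ Tbar G₀ G t (fun i => os i.castSucc)).bind fun p =>
        (Tbar (os (Fin.last t)) (p.2 (Fin.last t))).bind fun z' =>
          (G (p.2 (Fin.last t), os (Fin.last t), z')).map
            (fun s' => (Fin.snoc p.1 s', Fin.snoc p.2 z'))

/-- The grounded simulated (future-state) distribution `B̄_t(o₀, …, o_{t−1})`: the marginal law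
of `(S₀, …, S_t)` under `simLaw`. -/
noncomputable def simGroundLaw {S Z O : Type*} [MeasurableSpace S] [MeasurableSpace Z]
    [MeasurableSpace O]
    (p₀ : Measure S) (φ : S → Z) (Tbar : O → Kernel Z Z)
    (G₀ : Kernel Z S) (G : Kernel (Z × O × Z) S)
    (t : ℕ) (os : Fin t → O) : Measure (Fin (t + 1) → S) :=
  (simLaw p₀ φ Tbar G₀ G t os).map Prod.fst

/-!
Disintegrating the one-step law of the next ground state along `φ` gives a kernel `G` for which
drawing `Z' ~ T̄_o(z)` and then `S' ~ G(z, o, Z')` produces a pair `(φ(S'), S')` with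
`S' ~ T̃_o(z)`, and likewise for `G₀` and `p₀`. The simulated abstract state is thus almost surely
the image of the simulated ground state, so the joint law of the simulation is by induction the
image of the ground law under `s ↦ (s, φ ∘ s)`.
-/

section Bind

variable {α β γ : Type*} {mα : MeasurableSpace α} {mβ : MeasurableSpace β}
  {mγ : MeasurableSpace γ}

lemma map_bind_eq_map_bind_of_forall {α' β' : Type*} {mα' : MeasurableSpace α'}
    {mβ' : MeasurableSpace β'} (μ : Measure α) {F : α → β} (hF : Measurable F) {F' : α' → β'}
    (hF' : Measurable F') {K : β → Measure β'} (hK : Measurable K) {L : α → Measure α'}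
    (hL : Measurable L) (h : ∀ a, K (F a) = (L a).map F') :
    (μ.map F).bind K = (μ.bind L).map F' := by
  have hmap : (μ.bind L).map F' = μ.bind ((⟨L, hL⟩ : Kernel α α').map F') :=
    Measure.map_comp μ ⟨L, hL⟩ hF'
  rw [hmap, Measure.bind, Measure.map_map hK hF, Measure.bind]
  congr 2 with a : 1
  rw [Kernel.map_apply _ hF', Function.comp_apply, h]
  rfl

variable (κ : Kernel α β) [IsSFiniteKernel κ] {f : α × β → γ}

lemma id_prod_map_apply (hf : Measurable f) (a : α) :
    (Kernel.id ×ₖ κ).map f a = (κ a).map fun b ↦ f (a, b) := by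
  rw [Kernel.map_apply _ hf, Kernel.prod_apply, Kernel.id_apply, Measure.dirac_prod,
    Measure.map_map hf measurable_prodMk_left]
  rfl

lemma measurable_map_kernel_comp {δ : Type*} [MeasurableSpace δ] {h : δ → α} (hh : Measurable h)
    {f : δ × β → γ} (hf : Measurable f) :
    Measurable fun d ↦ (κ (h d)).map fun b ↦ f (d, b) := by
  simp only [← Kernel.comap_apply κ hh, ← id_prod_map_apply (κ.comap h hh) hf]
  exact Kernel.measurable _

lemma bind_map_eq_map_compProd (μ : Measure α) [SFinite μ] (hf : Measurable f) :
    μ.bind (fun a ↦ (κ a).map fun b ↦ f (a, b)) = (μ ⊗ₘ κ).map f := by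
  simp only [← id_prod_map_apply κ hf]
  rw [Measure.compProd_eq_comp_prod, Measure.map_comp _ _ hf]

end Bind

section CondDistrib

variable {α Ω X Y γ : Type*} {mα : MeasurableSpace α} {mΩ : MeasurableSpace Ω}
  {mX : MeasurableSpace X} {mY : MeasurableSpace Y} {mγ : MeasurableSpace γ}

lemma exists_kernel_hasCondDistrib [StandardBorelSpace Y] [Nonempty Y]
    [MeasurableSpace.CountableOrCountablyGenerated α X] (κ : Kernel α Ω) [IsFiniteKernel κ]
    {x : Ω → X} (hx : Measurable x) {y : Ω → Y} (hy : Measurable y) :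
    ∃ η : Kernel (α × X) Y, IsMarkovKernel η ∧ ∀ a, HasCondDistrib y x (η.sectR a) (κ a) := by
  let ρ : Kernel α (X × Y) := κ.map fun ω ↦ (x ω, y ω)
  refine ⟨ρ.condKernel, inferInstance, fun a ↦ ⟨by fun_prop, ?_⟩⟩
  have hfst : (κ a).map x = ρ.fst a := by
    rw [Kernel.fst_apply, Kernel.map_apply _ (hx.prodMk hy), ← Measure.fst,
      Measure.fst_map_prodMk hy]
  rw [hfst, ← Kernel.compProd_apply_eq_compProd_sectR, ρ.disintegrate,
    Kernel.map_apply _ (hx.prodMk hy)]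

variable {P : Measure Ω} [SFinite P] {κ : Kernel X Y} {x : Ω → X} {y : Ω → Y}

lemma map_bind_map_of_hasCondDistrib [IsSFiniteKernel κ] (h : HasCondDistrib y x κ P)
    {f : X × Y → γ} (hf : Measurable f) :
    (P.map x).bind (fun a ↦ (κ a).map fun b ↦ f (a, b)) = P.map fun ω ↦ f (x ω, y ω) := by
  rw [bind_map_eq_map_compProd κ _ hf, ← h.map_eq,
    AEMeasurable.map_map_of_aemeasurable hf.aemeasurable h.aemeasurable]
  rfl

lemma map_bind_of_hasCondDistrib [IsSFiniteKernel κ] (h : HasCondDistrib y x κ P) :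
    (P.map x).bind κ = P.map y := by
  simpa using map_bind_map_of_hasCondDistrib h measurable_snd

lemma ae_preimage_singleton_eq_one_of_hasCondDistrib [MeasurableEq X] [IsMarkovKernel κ] {g : Y → X}
    (hg : Measurable g) (h : HasCondDistrib y (g ∘ y) κ P) :
    ∀ᵐ a ∂P.map (g ∘ y), κ a (g ⁻¹' {a}) = 1 := by
  have hgraph : MeasurableSet {p : X × Y | g p.2 = p.1} :=
    measurableSet_eq_fun (hg.comp measurable_snd) measurable_fst
  have hjoint : ∀ᵐ p ∂(P.map (g ∘ y) ⊗ₘ κ), g p.2 = p.1 := by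
    rw [← h.map_eq, ae_map_iff h.aemeasurable hgraph]
    exact .of_forall fun _ ↦ rfl
  filter_upwards [Measure.ae_ae_of_ae_compProd hjoint] with a ha
  exact (prob_compl_eq_zero_iff (hg (measurableSet_singleton a))).1 ha

end CondDistrib

section Trajectory

lemma measurable_snoc {α : Type*} [MeasurableSpace α] {n : ℕ} {X : Fin (n + 1) → Type*}
    [∀ i, MeasurableSpace (X i)] {f : α → ∀ i : Fin n, X i.castSucc} {g : α → X (Fin.last n)}
    (hf : Measurable f) (hg : Measurable g) :
    Measurable fun a ↦ (Fin.snoc (f a) (g a) : ∀ i, X i) := by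
  refine measurable_pi_lambda _ (Fin.lastCases ?_ fun i ↦ ?_)
  · simpa only [Fin.snoc_last] using hg
  · simpa only [Fin.snoc_castSucc] using hf.eval

variable {S Z O : Type*}

/-- A ground trajectory paired with its abstraction. The joint law of the grounded simulation is
the image of the ground law under this map. -/
def withAbstraction {ι : Type*} (φ : S → Z) (s : ι → S) : (ι → S) × (ι → Z) :=
  (s, φ ∘ s)

/-- Extension of a pair of a ground and an abstract trajectory by one step of each, as performed by
the simulation. The new abstract state comes first in `q`, in the order in which the two states are
drawn. -/
def snocPair {n : ℕ} (p : (Fin n → S) × (Fin n → Z)) (q : Z × S) :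
    (Fin (n + 1) → S) × (Fin (n + 1) → Z) :=
  (Fin.snoc p.1 q.2, Fin.snoc p.2 q.1)

lemma withAbstraction_snoc (φ : S → Z) {n : ℕ} (s : Fin n → S) (s' : S) :
    withAbstraction φ (Fin.snoc s s' : Fin (n + 1) → S) =
      snocPair (withAbstraction φ s) (φ s', s') :=
  Prod.ext rfl (Fin.comp_snoc φ s s')

variable [MeasurableSpace S] [MeasurableSpace Z]

lemma measurable_snocPair {α : Type*} [MeasurableSpace α] {n : ℕ}
    {f : α → (Fin n → S) × (Fin n → Z)} {g : α → Z × S} (hf : Measurable f) (hg : Measurable g) :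
    Measurable fun a ↦ snocPair (f a) (g a) :=
  (measurable_snoc hf.fst hg.snd).prodMk (measurable_snoc hf.snd hg.fst)

variable {φ : S → Z}

lemma measurable_withAbstraction {ι : Type*} (hφ : Measurable φ) :
    Measurable (withAbstraction φ : (ι → S) → (ι → S) × (ι → Z)) := by
  unfold withAbstraction
  fun_prop

lemma map_bind_map_snocPair (hφ : Measurable φ) {n : ℕ} (μ : Measure (Fin (n + 1) → S))
    (κ : Kernel Z S) [IsSFiniteKernel κ] :
    (μ.map (withAbstraction φ)).bind (fun p ↦
        (κ (p.2 (Fin.last n))).map fun s' ↦ snocPair p (φ s', s')) =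
      (μ.bind fun s ↦ (κ.comap φ hφ (s (Fin.last n))).map fun s' ↦
        (Fin.snoc s s' : Fin (n + 2) → S)).map (withAbstraction φ) := by
  refine map_bind_eq_map_bind_of_forall μ (measurable_withAbstraction hφ)
    (measurable_withAbstraction hφ) ?_ ?_ fun s ↦ ?_
  · exact measurable_map_kernel_comp κ (by fun_prop) (f := fun q ↦ snocPair q.1 (φ q.2, q.2))
      (measurable_snocPair measurable_fst (by fun_prop))
  · exact measurable_map_kernel_comp _ (measurable_pi_apply _)
      (f := fun q : (Fin (n + 1) → S) × S ↦ (Fin.snoc q.1 q.2 : Fin (n + 2) → S))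
      (measurable_snoc measurable_fst measurable_snd)
  · have hsnoc : Measurable fun s' : S ↦ (Fin.snoc s s' : Fin (n + 2) → S) :=
      measurable_snoc measurable_const measurable_id
    rw [Measure.map_map (measurable_withAbstraction hφ) hsnoc]
    simp only [Function.comp_def, withAbstraction_snoc]
    rfl

variable [MeasurableSpace O]

lemma simLaw_eq_map_groundLaw {p₀ : Measure S} [SFinite p₀] (hφ : Measurable φ)
    (Ttil : O → Kernel Z S) [∀ o, IsSFiniteKernel (Ttil o)]
    {G₀ : Kernel Z S} [IsSFiniteKernel G₀] (hG₀ : HasCondDistrib id φ G₀ p₀)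
    {G : Kernel (Z × O × Z) S} [IsSFiniteKernel G]
    (hG : ∀ z o, HasCondDistrib id φ ((G.sectR z).sectR o) (Ttil o z))
    (t : ℕ) (os : Fin t → O) :
    simLaw p₀ φ (fun o ↦ (Ttil o).map φ) G₀ G t os =
      (groundLaw p₀ (fun o ↦ (Ttil o).comap φ hφ) t os).map (withAbstraction φ) := by
  induction t with
  | zero =>
    rw [simLaw, groundLaw, Measure.map_map (measurable_withAbstraction hφ) (by fun_prop)]
    exact map_bind_map_of_hasCondDistrib hG₀
      (f := fun p ↦ ((fun _ ↦ p.2, fun _ ↦ p.1) : (Fin 1 → S) × (Fin 1 → Z))) (by fun_prop)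
  | succ t ih =>
    have hstep (p : (Fin (t + 1) → S) × (Fin (t + 1) → Z)) (o : O) :
        (((Ttil o).map φ) (p.2 (Fin.last t))).bind (fun z' ↦
          (G (p.2 (Fin.last t), o, z')).map fun s' ↦ snocPair p (z', s')) =
        (Ttil o (p.2 (Fin.last t))).map fun s' ↦ snocPair p (φ s', s') := by
      rw [Kernel.map_apply _ hφ]
      exact map_bind_map_of_hasCondDistrib (hG _ o) (f := snocPair p)
        (measurable_snocPair measurable_const measurable_id)
    rw [simLaw, groundLaw, ih, ← map_bind_map_snocPair hφ _ (Ttil (os (Fin.last t)))]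
    exact congrArg _ (funext fun p ↦ hstep p _)

end Trajectory

theorem dynamics_preserving_implies_grounded_simulation_general
    {S Z O : Type*} [MeasurableSpace S] [StandardBorelSpace S] [Nonempty S]
    [MeasurableSpace Z] [MeasurableSpace.CountablyGenerated Z] [MeasurableEq Z]
    [MeasurableSpace O]
    (p₀ : Measure S) [IsFiniteMeasure p₀] (φ : S → Z) (hφ : Measurable φ)
    (T : O → Kernel S S) (Ttil : Kernel (Z × O) S) [IsFiniteKernel Ttil]
    (hdyn : ∀ o s, T o s = Ttil (φ s, o)) :
    ∃ (G₀ : Kernel Z S), IsMarkovKernel G₀ ∧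
      ∃ (G : Kernel (Z × O × Z) S), IsMarkovKernel G ∧
        (p₀ = (p₀.map φ).bind (fun z ↦ G₀ z) ∧
          ∀ᵐ z ∂(p₀.map φ), G₀ z (φ ⁻¹' {z}) = 1) ∧
        (∀ (z : Z) (o : O),
          Ttil (z, o) = (((Ttil.sectL o).map φ) z).bind (fun z' ↦ G (z, o, z')) ∧
          ∀ᵐ z' ∂(((Ttil.sectL o).map φ) z), G (z, o, z') (φ ⁻¹' {z'}) = 1) ∧
        (∀ (t : ℕ) (os : Fin t → O),
          simGroundLaw p₀ φ (fun o ↦ (Ttil.sectL o).map φ) G₀ G t os =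
            groundLaw p₀ T t os) := by
  obtain rfl : T = fun o ↦ (Ttil.sectL o).comap φ hφ := by
    ext o s : 2
    exact hdyn o s
  obtain ⟨η, hη, hcond⟩ := exists_kernel_hasCondDistrib Ttil hφ measurable_id
  let G₀ : Kernel Z S := condDistrib id φ p₀
  let G : Kernel (Z × O × Z) S := η.comap MeasurableEquiv.prodAssoc.symm (by fun_prop)
  have hG₀ : HasCondDistrib id φ G₀ p₀ :=
    ⟨by fun_prop, (compProd_map_condDistrib aemeasurable_id).symm⟩
  have hG (z : Z) (o : O) : HasCondDistrib id φ ((G.sectR z).sectR o) (Ttil.sectL o z) :=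
    hcond (z, o)
  refine ⟨G₀, inferInstance, G, inferInstance, ⟨?_, ?_⟩, fun z o ↦ ⟨?_, ?_⟩, fun t os ↦ ?_⟩
  · simpa using (map_bind_of_hasCondDistrib hG₀).symm
  · exact ae_preimage_singleton_eq_one_of_hasCondDistrib hφ hG₀
  · rw [Kernel.map_apply _ hφ]
    simpa using! (map_bind_of_hasCondDistrib (hG z o)).symm
  · rw [Kernel.map_apply _ hφ]
    exact ae_preimage_singleton_eq_one_of_hasCondDistrib hφ (hG z o)
  · rw [simGroundLaw, simLaw_eq_map_groundLaw hφ _ hG₀ hG,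
      Measure.map_map measurable_fst (measurable_withAbstraction hφ)]
    exact Measure.map_id

/-- if `φ` is dynamics-preserving, i.e. `T_o(s) = T̃_o(φ(s))` for Markov kernels
`T̃_o : Z → P(S)`, and the abstract kernels are `T̄_o(z) := (T̃_o z).map φ`, then there exist an
initial grounding `G₀` and a transition grounding `G` (Markov kernels) such that (i) `p₀`
factors as `(p₀.map φ).bind G₀` with `G₀(z)` supported on `φ⁻¹{z}` almost everywhere, (ii)
`T̃_o(z) = ∫ G(z,o,z') d(T̄_o z)(z')` with `G(z,o,z')` supported on `φ⁻¹{z'}` almost everywhere,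
and (iii) the grounded simulated distribution equals the ground future-state distribution for
every horizon and every option sequence. -/
theorem dynamics_preserving_implies_grounded_simulation
    {S Z O : Type*} [MeasurableSpace S] [StandardBorelSpace S] [Nonempty S]
    [MeasurableSpace Z] [StandardBorelSpace Z] [Nonempty Z]
    [Fintype O] [MeasurableSpace O] [DiscreteMeasurableSpace O]
    (p₀ : Measure S) [IsProbabilityMeasure p₀]
    (φ : S → Z) (hφ : Measurable φ)
    (T : O → Kernel S S) (hT : ∀ o, IsMarkovKernel (T o))
    (Ttil : O → Kernel Z S) (hTtil : ∀ o, IsMarkovKernel (Ttil o))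
    (hdyn : ∀ o s, T o s = Ttil o (φ s)) :
    ∃ (G₀ : Kernel Z S), IsMarkovKernel G₀ ∧
      ∃ (G : Kernel (Z × O × Z) S), IsMarkovKernel G ∧
        -- (i)
        (p₀ = (p₀.map φ).bind (fun z => G₀ z) ∧
          ∀ᵐ z ∂(p₀.map φ), G₀ z (φ ⁻¹' {z}) = 1) ∧
        -- (ii)
        (∀ (z : Z) (o : O),
          Ttil o z = (((Ttil o).map φ) z).bind (fun z' => G (z, o, z')) ∧
          ∀ᵐ z' ∂(((Ttil o).map φ) z), G (z, o, z') (φ ⁻¹' {z'}) = 1) ∧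
        -- (iii)
        (∀ (t : ℕ) (os : Fin t → O),
          simGroundLaw p₀ φ (fun o => (Ttil o).map φ) G₀ G t os =
            groundLaw p₀ T t os) := by
  let κ : Kernel (Z × O) S :=
    ⟨fun p ↦ Ttil p.2 p.1, measurable_from_prod_countable_left fun o ↦ (Ttil o).measurable⟩
  have : IsMarkovKernel κ := ⟨fun p ↦ (hTtil p.2).isProbabilityMeasure p.1⟩
  exact dynamics_preserving_implies_grounded_simulation_general p₀ φ hφ T κ hdyn
end

section
/- Assume Rel is a support relation for G, that the grounding is dynamics-preserving on Rel (for every s̄ ∈ S̄ and every s with (s̄, s) ∈ Rel, T(s) = T̃(s̄) as probability measures on S), and that the abstract reward is the grounded expectation of the ground reward (R̄(s̄) = ∫ R dG(s̄) for every s̄). If v satisfies the ground Bellman equation and v̄ satisfies the abstract Bellman equation, then the abstract value equals the expected ground value under the grounding: v̄(s̄) = ∫ v dG(s̄) for every s̄ ∈ S̄. -/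
open MeasureTheory ProbabilityTheory

/-!
Integrating the ground Bellman equation against `G s̄` gives a Bellman equation for the grounded
value `s̄ ↦ ∫ v dG(s̄)`: on the support of `G s̄` the ground dynamics do not depend on `s`, so the
continuation value there is the constant `∫ v d((T̄ s̄).bind G) = ∫ (∫ v dG(s̄')) d(T̄ s̄)(s̄')`.
The abstract value solves the same equation, and a bounded solution is unique because the Bellman
operator contracts the supremum norm by the factor `|γ|`.
-/

section Bellman

variable {α E : Type*} [MeasurableSpace α] [NormedAddCommGroup E] [NormedSpace ℝ E]
  {κ : Kernel α α} {γ : ℝ}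

/-- The Bellman equation `v = r + γ κ v` of policy evaluation, for the transition kernel `κ`,
discount factor `γ` and reward `r`. The integral is Bochner's, so it carries its meaning only where
`v` is integrable. -/
def SatisfiesBellman (κ : Kernel α α) (γ : ℝ) (r v : α → E) : Prop :=
  ∀ a, v a = r a + γ • ∫ b, v b ∂κ a

theorem eq_zero_of_forall_eq_smul_integral [IsZeroOrMarkovKernel κ] (hγ : |γ| < 1) {f : α → E}
    (hf_bdd : ∃ C, ∀ a, ‖f a‖ ≤ C) (hf : ∀ a, f a = γ • ∫ b, f b ∂κ a) : f = 0 := by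
  obtain ⟨C, hC⟩ := hf_bdd
  have hbdd : BddAbove (Set.range fun a ↦ ‖f a‖) := ⟨C, Set.forall_mem_range.2 hC⟩
  set M := ⨆ a, ‖f a‖
  have hM_nonneg : 0 ≤ M := Real.iSup_nonneg fun a ↦ norm_nonneg (f a)
  have norm_integral_le (a : α) : ‖∫ b, f b ∂κ a‖ ≤ M :=
    calc ‖∫ b, f b ∂κ a‖ ≤ M * (κ a).real Set.univ :=
          norm_integral_le_of_norm_le_const (.of_forall (le_ciSup hbdd))
      _ ≤ M := mul_le_of_le_one_right hM_nonneg measureReal_le_one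
  have norm_le (a : α) : ‖f a‖ ≤ |γ| * M := by
    rw [hf a, norm_smul, Real.norm_eq_abs]
    exact mul_le_mul_of_nonneg_left (norm_integral_le a) (abs_nonneg γ)
  have hM_contract : M ≤ |γ| * M := Real.iSup_le norm_le (by positivity)
  have hM_nonpos : M ≤ 0 := by nlinarith
  exact funext fun a ↦ norm_le_zero_iff.1 ((le_ciSup hbdd a).trans hM_nonpos)

theorem SatisfiesBellman.eq_of_bounded_sub [IsZeroOrMarkovKernel κ] (hγ : |γ| < 1) {r v w : α → E}
    (hv : SatisfiesBellman κ γ r v) (hw : SatisfiesBellman κ γ r w)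
    (hv_int : ∀ a, Integrable v (κ a)) (hw_int : ∀ a, Integrable w (κ a))
    (hbdd : ∃ C, ∀ a, ‖v a - w a‖ ≤ C) : v = w := by
  refine sub_eq_zero.1 (eq_zero_of_forall_eq_smul_integral (κ := κ) hγ hbdd fun a ↦ ?_)
  calc v a - w a = γ • (∫ b, v b ∂κ a - ∫ b, w b ∂κ a) := by
        rw [hv a, hw a, add_sub_add_left_eq_sub, smul_sub]
    _ = γ • ∫ b, (v - w) b ∂κ a := by rw [integral_sub' (hv_int a) (hw_int a)]

end Bellman

section Grounding

variable {S Sb E : Type*} [MeasurableSpace S] [MeasurableSpace Sb]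
  [NormedAddCommGroup E] [NormedSpace ℝ E]
  {T : Kernel S S} {Tb : Kernel Sb Sb} {G : Kernel Sb S} {γ : ℝ}

theorem SatisfiesBellman.integral_grounding [CompleteSpace E] [IsMarkovKernel G] {R v : S → E}
    (hv : SatisfiesBellman T γ R v)
    (hdyn : ∀ sb, ∀ᵐ s ∂G sb, T s = (G ∘ₖ Tb) sb)
    (hv_int : ∀ sb, Integrable v (G sb)) (hv_int_comp : ∀ sb, Integrable v ((G ∘ₖ Tb) sb)) :
    SatisfiesBellman Tb γ (fun sb ↦ ∫ s, R s ∂G sb) (fun sb ↦ ∫ s, v s ∂G sb) := by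
  intro sb
  set c := ∫ sb', ∫ s, v s ∂G sb' ∂Tb sb
  have reward_ae_eq : ∀ᵐ s ∂G sb, R s = v s - γ • c := by
    filter_upwards [hdyn sb] with s hs
    rw [eq_sub_iff_add_eq, hv s, hs, Kernel.integral_comp (hv_int_comp sb)]
  have integral_reward : ∫ s, R s ∂G sb = ∫ s, v s ∂G sb - γ • c := by
    rw [integral_congr_ae reward_ae_eq, integral_sub (hv_int sb) (integrable_const _),
      integral_const, probReal_univ, one_smul]
  exact sub_eq_iff_eq_add.1 integral_reward.symm

theorem abstract_value_eq_grounded_value_general [CompleteSpace E] [IsZeroOrMarkovKernel Tb]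
    [IsMarkovKernel G] (hγ : |γ| < 1)
    (hdyn : ∀ sb, ∀ᵐ s ∂G sb, T s = (G ∘ₖ Tb) sb) {R v : S → E} {vb : Sb → E}
    (hv_meas : StronglyMeasurable v) (hv_bdd : ∃ C, ∀ s, ‖v s‖ ≤ C)
    (hv : SatisfiesBellman T γ R v)
    (hvb_meas : StronglyMeasurable vb) (hvb_bdd : ∃ C, ∀ sb, ‖vb sb‖ ≤ C)
    (hvb : SatisfiesBellman Tb γ (fun sb ↦ ∫ s, R s ∂G sb) vb) (sb : Sb) :
    vb sb = ∫ s, v s ∂G sb := by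
  obtain ⟨C, hC⟩ := hv_bdd
  obtain ⟨Cb, hCb⟩ := hvb_bdd
  have hv_int (μ : Measure S) [IsFiniteMeasure μ] : Integrable v μ :=
    .of_bound hv_meas.aestronglyMeasurable C (.of_forall hC)
  have hvb_int (sb : Sb) : Integrable vb (Tb sb) :=
    .of_bound hvb_meas.aestronglyMeasurable Cb (.of_forall hCb)
  have hground_int (sb : Sb) : Integrable (fun sb' ↦ ∫ s, v s ∂G sb') (Tb sb) :=
    (hv_int ((G ∘ₖ Tb) sb)).integral_comp
  have hground : SatisfiesBellman Tb γ (fun sb ↦ ∫ s, R s ∂G sb) (fun sb ↦ ∫ s, v s ∂G sb) :=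
    hv.integral_grounding hdyn (fun sb ↦ hv_int (G sb)) (fun sb ↦ hv_int ((G ∘ₖ Tb) sb))
  have hground_bdd (sb : Sb) : ‖∫ s, v s ∂G sb‖ ≤ C := by
    simpa using norm_integral_le_of_norm_le_const (μ := G sb) (.of_forall hC)
  have hsub_bdd (sb : Sb) : ‖vb sb - ∫ s, v s ∂G sb‖ ≤ Cb + C :=
    norm_sub_le_of_le (hCb sb) (hground_bdd sb)
  exact congrFun (hvb.eq_of_bounded_sub hγ hground hvb_int hground_int ⟨Cb + C, hsub_bdd⟩) sb

end Grounding

/-- If `Rel` is a support relation for the grounding kernel `G`, the grounding is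
dynamics-preserving on `Rel` (i.e. `T s = (T̄ s̄).bind G` whenever `(s̄, s) ∈ Rel`), and the
abstract reward is the grounded expectation of the ground reward, then any bounded measurable
solutions of the ground and abstract Bellman equations satisfy `v̄ s̄ = ∫ v dG(s̄)`. -/
theorem abstract_value_eq_grounded_value
    {S Sb : Type*} [MeasurableSpace S] [MeasurableSpace Sb]
    (T : Kernel S S) [IsMarkovKernel T]
    (Tb : Kernel Sb Sb) [IsMarkovKernel Tb]
    (G : Kernel Sb S) [IsMarkovKernel G]
    (γ : ℝ) (hγ0 : 0 ≤ γ) (hγ1 : γ < 1)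
    (R : S → ℝ) (hRmeas : Measurable R) (hRbdd : ∃ C, ∀ s, |R s| ≤ C)
    (Rb : Sb → ℝ) (hRbmeas : Measurable Rb) (hRbbdd : ∃ C, ∀ sb, |Rb sb| ≤ C)
    (Rel : Set (Sb × S)) (hRelMeas : MeasurableSet Rel)
    (hRelSupp : ∀ sb, G sb {s | (sb, s) ∈ Rel} = 1)
    (hdyn : ∀ sb s, (sb, s) ∈ Rel → T s = (Tb sb).bind (fun sb' => G sb'))
    (hRbG : ∀ sb, Rb sb = ∫ s, R s ∂(G sb))
    (v : S → ℝ) (hvmeas : Measurable v) (hvbdd : ∃ C, ∀ s, |v s| ≤ C)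
    (hvBell : ∀ s, v s = R s + γ * ∫ s', v s' ∂(T s))
    (vb : Sb → ℝ) (hvbmeas : Measurable vb) (hvbbdd : ∃ C, ∀ sb, |vb sb| ≤ C)
    (hvbBell : ∀ sb, vb sb = Rb sb + γ * ∫ sb', vb sb' ∂(Tb sb)) :
    ∀ sb, vb sb = ∫ s, v s ∂(G sb) := by
  obtain rfl : Rb = fun sb ↦ ∫ s, R s ∂G sb := funext hRbG
  have hRel_ae (sb : Sb) : ∀ᵐ s ∂G sb, (sb, s) ∈ Rel :=
    (mem_ae_iff_prob_eq_one (measurable_prodMk_left hRelMeas)).2 (hRelSupp sb)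
  exact abstract_value_eq_grounded_value_general (abs_lt.2 ⟨by linarith, hγ1⟩)
    (fun sb ↦ (hRel_ae sb).mono (hdyn sb)) hvmeas.stronglyMeasurable hvbdd hvBell
    hvbmeas.stronglyMeasurable hvbbdd hvbBell
end

section
/- (Value Loss Bound) Assume Rel is a support relation for G, v satisfies the ground Bellman equation with ‖v‖_∞ ≤ Vmax, v̄ is bounded measurable and satisfies the abstract Bellman equation, and for every (s̄, s) ∈ Rel: ‖T(s) − T̃(s̄)‖₁² ≤ ε_T and |R(s) − R̄(s̄)|² ≤ ε_R. Then for every (s̄, s) ∈ Rel, |v(s) − v̄(s̄)| ≤ (√ε_R + γ · Vmax · √ε_T) / (1 − γ). -/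
open MeasureTheory ProbabilityTheory

/-- The total variation norm `‖μ - ν‖₁` of the difference of two finite measures, i.e. the total
mass of the total variation of the signed measure `μ - ν` (and junk value `0` if one of the
measures is not finite). -/
noncomputable def tvDist {α : Type*} [MeasurableSpace α] (μ ν : Measure α) : ℝ :=
  open scoped Classical in
  if h : IsFiniteMeasure μ ∧ IsFiniteMeasure ν then
    (((@Measure.toSignedMeasure α _ μ h.1) -
        (@Measure.toSignedMeasure α _ ν h.2)).totalVariation Set.univ).toReal
  else 0

/-!
Both value functions are compared through the measure `T̄(s̄) ⊗ G` on `S̄ × S`: its marginals are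
`T̄(s̄)` and the grounded transition `T̃(s̄)`, and it is concentrated on the support relation. Hence
the expected values of `v̄` under `T̄(s̄)` and of `v` under `T̃(s̄)` differ by at most
`D = sup |v(s) - v̄(s̄)|` over the relation, while replacing `T̃(s̄)` by `T(s)` costs at most
`Vmax ‖T(s) - T̃(s̄)‖₁`. The Bellman equations then give `D ≤ √ε_R + γ (Vmax √ε_T + D)`, which is
solved for the finite number `D`.
-/

lemma le_div_one_sub_of_forall_bound_improves {ι : Type*} {f : ι → ℝ} {c γ : ℝ} (hγ : γ < 1)
    (hf : BddAbove (Set.range f))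
    (improve : ∀ D, (∀ i, f i ≤ D) → ∀ i, f i ≤ c + γ * D) (i : ι) :
    f i ≤ c / (1 - γ) := by
  have : Nonempty ι := ⟨i⟩
  have iSup_le_affine : ⨆ j, f j ≤ c + γ * ⨆ j, f j :=
    ciSup_le (improve _ (le_ciSup hf))
  refine (le_ciSup hf i).trans ?_
  rw [le_div_iff₀ (by linarith)]
  linarith

lemma tvDist_eq_variation_real {α : Type*} [MeasurableSpace α] (μ ν : Measure α)
    [IsFiniteMeasure μ] [IsFiniteMeasure ν] :
    tvDist μ ν = (μ.toSignedMeasure - ν.toSignedMeasure).variation.real Set.univ := by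
  rw [← SignedMeasure.totalVariation_eq_variation, tvDist, dif_pos ⟨‹_›, ‹_›⟩, Measure.real]

section NormedSpace

variable {E : Type*} [NormedAddCommGroup E] [NormedSpace ℝ E]

lemma norm_integral_sub_integral_le_mul_tvDist {α : Type*} [MeasurableSpace α] {μ ν : Measure α}
    [IsFiniteMeasure μ] [IsFiniteMeasure ν] {f : α → E} (hμ : Integrable f μ)
    (hν : Integrable f ν) {C : ℝ} (hC : ∀ x, ‖f x‖ ≤ C) :
    ‖∫ x, f x ∂μ - ∫ x, f x ∂ν‖ ≤ C * tvDist μ ν := by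
  let σ : SignedMeasure α := μ.toSignedMeasure - ν.toSignedMeasure
  let B : E →L[ℝ] ℝ →L[ℝ] E := (ContinuousLinearMap.lsmul ℝ ℝ).flip
  have integral_sub_eq : ∫ x, f x ∂μ - ∫ x, f x ∂ν = σ.integral f B := by
    rw [VectorMeasure.integral_sub_vectorMeasure
      (by simpa [VectorMeasure.Integrable] using hμ) (by simpa [VectorMeasure.Integrable] using hν),
      VectorMeasure.integral_toSignedMeasure, VectorMeasure.integral_toSignedMeasure]
  have norm_B_le : ‖B‖ ≤ 1 :=
    (ContinuousLinearMap.opNorm_flip _).trans_le ContinuousLinearMap.opNorm_lsmul_le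
  have : IsFiniteMeasure σ.variation := by
    rw [← σ.totalVariation_eq_variation]
    infer_instance
  calc ‖∫ x, f x ∂μ - ∫ x, f x ∂ν‖
      = ‖σ.integral f B‖ := by rw [integral_sub_eq]
    _ ≤ ‖B‖ * ∫ x, ‖f x‖ ∂σ.variation := VectorMeasure.norm_integral_le_integral_norm
    _ ≤ ∫ x, ‖f x‖ ∂σ.variation :=
      mul_le_of_le_one_left (integral_nonneg fun _ => norm_nonneg _) norm_B_le
    _ ≤ C * σ.variation.real Set.univ :=
      (le_abs_self _).trans <| norm_integral_le_of_norm_le_const (f := fun x => ‖f x‖) <|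
        .of_forall fun x => (norm_norm (f x)).trans_le (hC x)
    _ = C * tvDist μ ν := by rw [tvDist_eq_variation_real]

section Coupling

variable {X Y : Type*} [MeasurableSpace X] [MeasurableSpace Y]

lemma norm_integral_snd_sub_integral_fst_le_of_ae {π : Measure (X × Y)} [IsProbabilityMeasure π]
    {f : X → E} {g : Y → E} (hf : Integrable f π.fst) (hg : Integrable g π.snd) {D : ℝ}
    (hD : ∀ᵐ p ∂π, ‖g p.2 - f p.1‖ ≤ D) :
    ‖∫ y, g y ∂π.snd - ∫ x, f x ∂π.fst‖ ≤ D := by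
  have integral_snd : ∫ y, g y ∂π.snd = ∫ p, g p.2 ∂π :=
    integral_map measurable_snd.aemeasurable hg.aestronglyMeasurable
  have integral_fst : ∫ x, f x ∂π.fst = ∫ p, f p.1 ∂π :=
    integral_map measurable_fst.aemeasurable hf.aestronglyMeasurable
  have integral_sub_eq : ∫ y, g y ∂π.snd - ∫ x, f x ∂π.fst = ∫ p, (g p.2 - f p.1) ∂π := by
    rw [integral_snd, integral_fst]
    exact (integral_sub (hg.comp_measurable measurable_snd)
      (hf.comp_measurable measurable_fst)).symm
  simpa [integral_sub_eq] using norm_integral_le_of_norm_le_const hD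

/-- `Rel` is a support relation for the kernel `G`: each `G x` gives full mass to the section of
`Rel` at `x`. For a non-measurable section the mass is the outer measure. -/
def IsSupportRelation (G : Kernel X Y) (Rel : Set (X × Y)) : Prop :=
  ∀ x, G x {y | (x, y) ∈ Rel} = 1

namespace IsSupportRelation

variable {G : Kernel X Y} [IsMarkovKernel G] {Rel : Set (X × Y)}

lemma ae_compProd_mem_of_subset (hRel : IsSupportRelation G Rel) {A : Set (X × Y)}
    (hA : MeasurableSet A) (hRelA : Rel ⊆ A) (μ : Measure X) [SFinite μ] :
    ∀ᵐ p ∂(μ ⊗ₘ G), p ∈ A := by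
  refine (Measure.ae_compProd_iff hA).2 (.of_forall fun x => ?_)
  have section_full : G x {y | (x, y) ∈ A} = 1 :=
    le_antisymm prob_le_one ((hRel x).ge.trans (measure_mono fun _ h => hRelA h))
  exact (mem_ae_iff_prob_eq_one (measurable_prodMk_left hA)).2 section_full

lemma norm_integral_bind_sub_integral_le (hRel : IsSupportRelation G Rel) {μ : Measure X}
    [IsProbabilityMeasure μ] {f : X → E} {g : Y → E} (hf : StronglyMeasurable f)
    (hfi : Integrable f μ) (hg : StronglyMeasurable g) (hgi : Integrable g (μ.bind G)) {D : ℝ}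
    (hD : ∀ x y, (x, y) ∈ Rel → ‖g y - f x‖ ≤ D) :
    ‖∫ y, g y ∂(μ.bind G) - ∫ x, f x ∂μ‖ ≤ D := by
  have close_meas : MeasurableSet {p : X × Y | ‖g p.2 - f p.1‖ ≤ D} :=
    ((hg.comp_measurable measurable_snd).sub
      (hf.comp_measurable measurable_fst)).norm.measurable measurableSet_Iic
  have close_ae : ∀ᵐ p ∂(μ ⊗ₘ G), ‖g p.2 - f p.1‖ ≤ D :=
    hRel.ae_compProd_mem_of_subset close_meas (fun p => hD p.1 p.2) μ
  rw [← Measure.snd_compProd] at hgi ⊢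
  nth_rw 2 [← Measure.fst_compProd μ G]
  exact norm_integral_snd_sub_integral_fst_le_of_ae (by rwa [Measure.fst_compProd]) hgi close_ae

lemma norm_integral_sub_integral_le (hRel : IsSupportRelation G Rel) {μ : Measure X}
    [IsProbabilityMeasure μ] {ν : Measure Y} [IsFiniteMeasure ν] {f : X → E} {g : Y → E}
    (hf : StronglyMeasurable f) (hfi : Integrable f μ) (hg : StronglyMeasurable g) {C D : ℝ}
    (hC : ∀ y, ‖g y‖ ≤ C) (hD : ∀ x y, (x, y) ∈ Rel → ‖g y - f x‖ ≤ D) :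
    ‖∫ y, g y ∂ν - ∫ x, f x ∂μ‖ ≤ C * tvDist ν (μ.bind G) + D := by
  have g_integrable (ρ : Measure Y) [IsFiniteMeasure ρ] : Integrable g ρ :=
    .of_bound hg.aestronglyMeasurable C (.of_forall hC)
  calc ‖∫ y, g y ∂ν - ∫ x, f x ∂μ‖
      ≤ ‖∫ y, g y ∂ν - ∫ y, g y ∂(μ.bind G)‖ + ‖∫ y, g y ∂(μ.bind G) - ∫ x, f x ∂μ‖ :=
        norm_sub_le_norm_sub_add_norm_sub ..
    _ ≤ C * tvDist ν (μ.bind G) + D :=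
        add_le_add (norm_integral_sub_integral_le_mul_tvDist (g_integrable _) (g_integrable _) hC)
          (hRel.norm_integral_bind_sub_integral_le hf hfi hg (g_integrable _) hD)

end IsSupportRelation

end Coupling

/-- `v` solves the Bellman equation `v = R + γ T v`. Values may be vectors, and `T` is any family
of measures. -/
def IsBellmanSolution {S : Type*} [MeasurableSpace S] (T : S → Measure S) (γ : ℝ) (R v : S → E) :
    Prop :=
  ∀ s, v s = R s + γ • ∫ s', v s' ∂(T s)

theorem value_loss_bound_general [CompleteSpace E]
    {S Sb : Type*} [MeasurableSpace S] [MeasurableSpace Sb]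
    {T : S → Measure S} [∀ s, IsFiniteMeasure (T s)]
    {Tb : Sb → Measure Sb} [∀ sb, IsProbabilityMeasure (Tb sb)]
    {G : Kernel Sb S} [IsMarkovKernel G] {Rel : Set (Sb × S)} (hRel : IsSupportRelation G Rel)
    {γ δT δR Vmax : ℝ} (hγ0 : 0 ≤ γ) (hγ1 : γ < 1) {R v : S → E} {Rb vb : Sb → E}
    (hv : StronglyMeasurable v) (hvbdd : ∀ s, ‖v s‖ ≤ Vmax) (hvBell : IsBellmanSolution T γ R v)
    (hvb : StronglyMeasurable vb) (hvbbdd : ∃ C, ∀ sb, ‖vb sb‖ ≤ C)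
    (hvbBell : IsBellmanSolution Tb γ Rb vb)
    (hT : ∀ sb s, (sb, s) ∈ Rel → tvDist (T s) ((Tb sb).bind G) ≤ δT)
    (hR : ∀ sb s, (sb, s) ∈ Rel → ‖R s - Rb sb‖ ≤ δR) (sb : Sb) (s : S) (h : (sb, s) ∈ Rel) :
    ‖v s - vb sb‖ ≤ (δR + γ * Vmax * δT) / (1 - γ) := by
  obtain ⟨C, hC⟩ := hvbbdd
  have gap_bddAbove : BddAbove (Set.range fun z : Rel => ‖v z.1.2 - vb z.1.1‖) := by
    refine ⟨Vmax + C, ?_⟩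
    rintro _ ⟨z, rfl⟩
    exact (norm_sub_le _ _).trans (add_le_add (hvbdd _) (hC _))
  refine le_div_one_sub_of_forall_bound_improves hγ1 gap_bddAbove ?_ ⟨(sb, s), h⟩
  rintro D hD ⟨⟨sb, s⟩, h⟩
  have expectation_gap : ‖∫ s', v s' ∂(T s) - ∫ sb', vb sb' ∂(Tb sb)‖ ≤
      Vmax * tvDist (T s) ((Tb sb).bind G) + D :=
    hRel.norm_integral_sub_integral_le hvb
      (.of_bound hvb.aestronglyMeasurable C (.of_forall hC)) hv hvbdd
      fun sb' s' h' => hD ⟨(sb', s'), h'⟩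
  have Vmax_nonneg : 0 ≤ Vmax := (norm_nonneg _).trans (hvbdd s)
  calc ‖v s - vb sb‖
      = ‖(R s - Rb sb) + γ • (∫ s', v s' ∂(T s) - ∫ sb', vb sb' ∂(Tb sb))‖ := by
        rw [hvBell s, hvbBell sb, smul_sub, add_sub_add_comm]
    _ ≤ ‖R s - Rb sb‖ + γ * ‖∫ s', v s' ∂(T s) - ∫ sb', vb sb' ∂(Tb sb)‖ := by
        grw [norm_add_le, norm_smul, Real.norm_of_nonneg hγ0]
    _ ≤ δR + γ * (Vmax * δT + D) := by
        grw [expectation_gap, hR sb s h, hT sb s h]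
    _ = δR + γ * Vmax * δT + γ * D := by ring

end NormedSpace

/-- Value Loss Bound: if on the support relation `Rel` the grounded transition
`T̃(s̄) = (T̄ s̄).bind G` is `√ε_T`-accurate in total variation and the abstract reward is
`√ε_R`-accurate, then bounded measurable solutions of the ground and abstract Bellman equations
satisfy `|v(s) - v̄(s̄)| ≤ (√ε_R + γ Vmax √ε_T) / (1 - γ)` on `Rel`. -/
theorem value_loss_bound
    {S Sb : Type*} [MeasurableSpace S] [MeasurableSpace Sb]
    (T : Kernel S S) [IsMarkovKernel T]
    (Tb : Kernel Sb Sb) [IsMarkovKernel Tb]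
    (G : Kernel Sb S) [IsMarkovKernel G]
    (γ : ℝ) (hγ0 : 0 ≤ γ) (hγ1 : γ < 1)
    (R : S → ℝ) (hRmeas : Measurable R) (hRbdd : ∃ C, ∀ s, |R s| ≤ C)
    (Rb : Sb → ℝ) (hRbmeas : Measurable Rb) (hRbbdd : ∃ C, ∀ sb, |Rb sb| ≤ C)
    (Rel : Set (Sb × S)) (hRelMeas : MeasurableSet Rel)
    (hRelSupp : ∀ sb, G sb {s | (sb, s) ∈ Rel} = 1)
    (εT εR Vmax : ℝ) (hεT : 0 ≤ εT) (hεR : 0 ≤ εR) (hVmax : 0 ≤ Vmax)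
    (v : S → ℝ) (hvmeas : Measurable v) (hvbdd : ∀ s, |v s| ≤ Vmax)
    (hvBell : ∀ s, v s = R s + γ * ∫ s', v s' ∂(T s))
    (vb : Sb → ℝ) (hvbmeas : Measurable vb) (hvbbdd : ∃ C, ∀ sb, |vb sb| ≤ C)
    (hvbBell : ∀ sb, vb sb = Rb sb + γ * ∫ sb', vb sb' ∂(Tb sb))
    (hT : ∀ sb s, (sb, s) ∈ Rel →
      tvDist (T s) ((Tb sb).bind (fun sb' => G sb')) ^ 2 ≤ εT)
    (hR : ∀ sb s, (sb, s) ∈ Rel → |R s - Rb sb| ^ 2 ≤ εR) :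
    ∀ sb s, (sb, s) ∈ Rel →
      |v s - vb sb| ≤ (Real.sqrt εR + γ * Vmax * Real.sqrt εT) / (1 - γ) := by
  exact value_loss_bound_general hRelSupp hγ0 hγ1 hvmeas.stronglyMeasurable hvbdd hvBell
    hvbmeas.stronglyMeasurable hvbbdd hvbBell
    (fun sb s h => Real.le_sqrt_of_sq_le (hT sb s h))
    (fun sb s h => Real.le_sqrt_of_sq_le (hR sb s h))
end

section
/- (One-step value loss, base case) Assume Rel is a support relation for G, v satisfies the ground Bellman equation with ‖v‖_∞ ≤ Vmax, and for every (s̄, s) ∈ Rel: ‖T(s) − T̃(s̄)‖₁² ≤ ε_T and |R(s) − R̄(s̄)|² ≤ ε_R. Define v̄₁(s̄) := R̄(s̄) + γ ∫ v dT̃(s̄). Then for every (s̄, s) ∈ Rel, |v(s) − v̄₁(s̄)| ≤ √ε_R + γ · Vmax · √ε_T. -/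
open MeasureTheory ProbabilityTheory

/-!
The Jordan decomposition of the signed measure `μ - ν` is the pair of truncated differences
`(μ - ν, ν - μ)`, so `‖μ - ν‖₁` is the sum of their masses and `∫ f ∂μ - ∫ f ∂ν` is the difference
of the integrals of `f` against them; hence a function bounded by `C` distinguishes `μ` from `ν` by
at most `C * ‖μ - ν‖₁`. Subtracting the abstract backup from the ground Bellman equation leaves a
reward difference and `γ` times such a difference of integrals.
-/

section TotalVariation

variable {α : Type*} [MeasurableSpace α] {μ ν : Measure α} [IsFiniteMeasure μ] [IsFiniteMeasure ν]

theorem measure_add_sub_eq_add_sub : μ + (ν - μ) = ν + (μ - ν) := by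
  rw [← Measure.toSignedMeasure_eq_toSignedMeasure_iff, Measure.toSignedMeasure_add,
    Measure.toSignedMeasure_add, add_comm ν.toSignedMeasure, ← sub_eq_sub_iff_add_eq_add]
  exact Measure.sub_toSignedMeasure_eq_toSignedMeasure_sub

theorem tvDist_eq_measureReal_sub_add :
    tvDist μ ν = (μ - ν).real Set.univ + (ν - μ).real Set.univ := by
  rw [tvDist, dif_pos ⟨inferInstance, inferInstance⟩, SignedMeasure.totalVariation,
    Measure.toJordanDecomposition_toSignedMeasure_sub,
    Measure.jordanDecompositionOfToSignedMeasureSub_posPart,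
    Measure.jordanDecompositionOfToSignedMeasureSub_negPart]
  exact measureReal_add_apply

variable {E : Type*} [NormedAddCommGroup E] [NormedSpace ℝ E] {f : α → E}

theorem integral_sub_integral_eq_integral_measure_sub (hμ : Integrable f μ) (hν : Integrable f ν) :
    ∫ x, f x ∂μ - ∫ x, f x ∂ν = ∫ x, f x ∂(μ - ν) - ∫ x, f x ∂(ν - μ) := by
  have hμν : Integrable f (μ - ν) := hμ.mono_measure Measure.sub_le
  have hνμ : Integrable f (ν - μ) := hν.mono_measure Measure.sub_le
  rw [sub_eq_sub_iff_add_eq_add, add_comm (∫ x, f x ∂(μ - ν)), ← integral_add_measure hμ hνμ,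
    ← integral_add_measure hν hμν, measure_add_sub_eq_add_sub]

theorem norm_integral_sub_integral_le_mul_tvDist_s8 {C : ℝ}
    (hfμ : AEStronglyMeasurable f μ) (hfν : AEStronglyMeasurable f ν)
    (hCμ : ∀ᵐ x ∂μ, ‖f x‖ ≤ C) (hCν : ∀ᵐ x ∂ν, ‖f x‖ ≤ C) :
    ‖∫ x, f x ∂μ - ∫ x, f x ∂ν‖ ≤ C * tvDist μ ν :=
  calc ‖∫ x, f x ∂μ - ∫ x, f x ∂ν‖
      = ‖∫ x, f x ∂(μ - ν) - ∫ x, f x ∂(ν - μ)‖ := by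
        rw [integral_sub_integral_eq_integral_measure_sub (.of_bound hfμ C hCμ)
          (.of_bound hfν C hCν)]
    _ ≤ ‖∫ x, f x ∂(μ - ν)‖ + ‖∫ x, f x ∂(ν - μ)‖ := norm_sub_le _ _
    _ ≤ C * (μ - ν).real Set.univ + C * (ν - μ).real Set.univ :=
        add_le_add (norm_integral_le_of_norm_le_const (ae_mono Measure.sub_le hCμ))
          (norm_integral_le_of_norm_le_const (ae_mono Measure.sub_le hCν))
    _ = C * tvDist μ ν := by rw [tvDist_eq_measureReal_sub_add, mul_add]

end TotalVariation

theorem one_step_value_loss_general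
    {S Sb : Type*} [MeasurableSpace S] [MeasurableSpace Sb]
    (T : Kernel S S) [IsFiniteKernel T] (Tg : Kernel Sb S) [IsFiniteKernel Tg]
    {γ : ℝ} (hγ : 0 ≤ γ) {R : S → ℝ} {Rb : Sb → ℝ} {εT εR Vmax : ℝ}
    {v : S → ℝ} (hvmeas : Measurable v) (hvbdd : ∀ s, |v s| ≤ Vmax)
    (hvBell : ∀ s, v s = R s + γ * ∫ s', v s' ∂(T s))
    {sb : Sb} {s : S} (hT : tvDist (T s) (Tg sb) ^ 2 ≤ εT) (hR : |R s - Rb sb| ^ 2 ≤ εR) :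
    |v s - (Rb sb + γ * ∫ s', v s' ∂(Tg sb))| ≤ √εR + γ * Vmax * √εT := by
  have hVmax : 0 ≤ Vmax := (abs_nonneg (v s)).trans (hvbdd s)
  have reward_loss : |R s - Rb sb| ≤ √εR := Real.le_sqrt_of_sq_le hR
  have transition_loss : |∫ s', v s' ∂(T s) - ∫ s', v s' ∂(Tg sb)| ≤ Vmax * √εT :=
    (norm_integral_sub_integral_le_mul_tvDist_s8 hvmeas.aestronglyMeasurable
      hvmeas.aestronglyMeasurable (.of_forall hvbdd) (.of_forall hvbdd)).trans
      (mul_le_mul_of_nonneg_left (Real.le_sqrt_of_sq_le hT) hVmax)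
  calc |v s - (Rb sb + γ * ∫ s', v s' ∂(Tg sb))|
      = |(R s - Rb sb) + γ * (∫ s', v s' ∂(T s) - ∫ s', v s' ∂(Tg sb))| := by
        rw [hvBell s]
        ring_nf
    _ ≤ |R s - Rb sb| + γ * |∫ s', v s' ∂(T s) - ∫ s', v s' ∂(Tg sb)| :=
        (abs_add_le _ _).trans_eq (by rw [abs_mul, abs_of_nonneg hγ])
    _ ≤ √εR + γ * (Vmax * √εT) := by gcongr
    _ = √εR + γ * Vmax * √εT := by rw [mul_assoc]

/-- One-step value loss, base case: under the support-relation hypotheses, with a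
bounded solution `v` of the ground Bellman equation, the one-step abstract backup
`v̄₁(s̄) := R̄(s̄) + γ ∫ v dT̃(s̄)` (where `T̃(s̄) = (T̄ s̄).bind G`) satisfies
`|v(s) - v̄₁(s̄)| ≤ √ε_R + γ Vmax √ε_T` for every `(s̄, s) ∈ Rel`. -/
theorem one_step_value_loss
    {S Sb : Type*} [MeasurableSpace S] [MeasurableSpace Sb]
    (T : Kernel S S) [IsMarkovKernel T]
    (Tb : Kernel Sb Sb) [IsMarkovKernel Tb]
    (G : Kernel Sb S) [IsMarkovKernel G]
    (γ : ℝ) (hγ0 : 0 ≤ γ) (hγ1 : γ < 1)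
    (R : S → ℝ) (hRmeas : Measurable R) (hRbdd : ∃ C, ∀ s, |R s| ≤ C)
    (Rb : Sb → ℝ) (hRbmeas : Measurable Rb) (hRbbdd : ∃ C, ∀ sb, |Rb sb| ≤ C)
    (Rel : Set (Sb × S)) (hRelMeas : MeasurableSet Rel)
    (hRelSupp : ∀ sb, G sb {s | (sb, s) ∈ Rel} = 1)
    (εT εR Vmax : ℝ) (hεT : 0 ≤ εT) (hεR : 0 ≤ εR) (hVmax : 0 ≤ Vmax)
    (v : S → ℝ) (hvmeas : Measurable v) (hvbdd : ∀ s, |v s| ≤ Vmax)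
    (hvBell : ∀ s, v s = R s + γ * ∫ s', v s' ∂(T s))
    (hT : ∀ sb s, (sb, s) ∈ Rel →
      tvDist (T s) ((Tb sb).bind (fun sb' => G sb')) ^ 2 ≤ εT)
    (hR : ∀ sb s, (sb, s) ∈ Rel → |R s - Rb sb| ^ 2 ≤ εR) :
    ∀ sb s, (sb, s) ∈ Rel →
      |v s - (Rb sb + γ * ∫ s', v s' ∂((Tb sb).bind (fun sb' => G sb')))| ≤
        Real.sqrt εR + γ * Vmax * Real.sqrt εT := by
  exact fun sb s hs => one_step_value_loss_general T (G ∘ₖ Tb) hγ0 hvmeas hvbdd hvBell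
    (hT sb s hs) (hR sb s hs)
end

section
/- (Information loss is expected KL divergence) Let (S, O, S') be random variables with S, S' valued in standard Borel spaces, O valued in a finite set, φ : S-space → Z-space measurable, and set Z := φ(S). Assume MI(S'; (S,O)) < ∞. Let κ_{(s,o)} denote the regular conditional distribution of S' given (S,O) = (s,o), and κ̃_{(z,o)} the regular conditional distribution of S' given (Z,O) = (z,o). Then the information lost by compressing S through φ equals the expected KL divergence between the true and abstracted transition distributions: MI(S'; (S,O)) − MI(S'; (Z,O)) = ∫ klDiv(κ_{(s,o)}, κ̃_{(φ(s),o)}) dμ_{(S,O)}(s,o). -/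
open MeasureTheory ProbabilityTheory
open scoped ENNReal

/-- Kullback–Leibler divergence (natural logarithm), valued in `ℝ≥0∞`: it is
`∫ log (dμ/dν) dμ` when `μ ≪ ν` and the log-likelihood ratio is integrable, and `∞`
otherwise. -/
noncomputable def klDiv {α : Type*} [MeasurableSpace α] (μ ν : Measure α) : ℝ≥0∞ :=
  open scoped Classical in
  if μ ≪ ν ∧ Integrable (llr μ ν) μ then ENNReal.ofReal (∫ x, llr μ ν x ∂μ) else ∞

/-- Mutual information `MI(X;Y) := klDiv (law of (X,Y)) ((law of X) ⊗ (law of Y))`. -/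
noncomputable def mutualInfo {Ω 𝓧 𝓨 : Type*} [MeasurableSpace Ω] [MeasurableSpace 𝓧]
    [MeasurableSpace 𝓨] (μ : Measure Ω) (X : Ω → 𝓧) (Y : Ω → 𝓨) : ℝ≥0∞ :=
  klDiv (μ.map (fun ω => (X ω, Y ω))) ((μ.map X).prod (μ.map Y))

/-!
Let `π` be the law of `(X, Y)`, `P` the law of `X`, `ρ` the law of `Y`, and `η` the conditional law
of `Y` given `f X`. Under the reference law `P ⊗ ρ`, the conditional law of `X` given `(f X, Y)` is
that of `X` given `f X`; the same is true under `P ⊗ (η ∘ f)`, for which `(f X, Y)` moreover has the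
same law as under `π`. The chain rule for the KL divergence, with `(f X, Y)` as first component,
therefore reads `KL(π, P ⊗ ρ) = KL(f_* P ⊗ η, f_* P ⊗ ρ) + KL(π, P ⊗ (η ∘ f))`. The left side is
`MI(Y; X)`, the first summand is `MI(Y; f X)`, and the second one is the expected KL divergence.
-/

namespace InformationLoss

section CompProd

variable {α β γ : Type*} [MeasurableSpace α] [MeasurableSpace β] [MeasurableSpace γ]

lemma map_compProd (P : Measure α) [SFinite P] {f : α → β} (hf : Measurable f)
    (κ : Kernel β γ) [IsSFiniteKernel κ] :
    P.map f ⊗ₘ κ = (P ⊗ₘ κ.comap f hf).map (Prod.map f id) := by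
  refine Measure.ext_of_lintegral _ fun h hh => ?_
  have hh' : Measurable fun p : α × γ => h (Prod.map f id p) := hh.comp (by fun_prop)
  rw [lintegral_map hh (by fun_prop), Measure.lintegral_compProd hh, Measure.lintegral_compProd hh',
    lintegral_map hh.lintegral_kernel_prod_right' hf]
  rfl

lemma compProd_compProd_prodMkRight_comm (P : Measure α) [SFinite P]
    (κ : Kernel α β) [IsSFiniteKernel κ] (η : Kernel α γ) [IsSFiniteKernel η] :
    (P ⊗ₘ κ) ⊗ₘ η.prodMkRight β =
      ((P ⊗ₘ η) ⊗ₘ κ.prodMkRight γ).map (fun q => ((q.1.1, q.2), q.1.2)) := by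
  refine Measure.ext_of_lintegral _ fun h hh => ?_
  have hh' : Measurable fun q : (α × γ) × β => h ((q.1.1, q.2), q.1.2) := hh.comp (by fun_prop)
  rw [lintegral_map hh (by fun_prop), Measure.lintegral_compProd hh,
    Measure.lintegral_compProd hh.lintegral_kernel_prod_right', Measure.lintegral_compProd hh',
    Measure.lintegral_compProd hh'.lintegral_kernel_prod_right']
  simp only [Kernel.prodMkRight_apply]
  refine lintegral_congr fun a => lintegral_lintegral_swap (Measurable.aemeasurable ?_)
  exact hh.comp (by fun_prop)

lemma map_compProd_compProd_condDistrib [StandardBorelSpace α] [Nonempty α]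
    (P : Measure α) [IsFiniteMeasure P] {f : α → β} (hf : Measurable f)
    (η : Kernel β γ) [IsSFiniteKernel η] :
    (P.map f ⊗ₘ η) ⊗ₘ (condDistrib id f P).prodMkRight γ =
      (P ⊗ₘ η.comap f hf).map (fun p => (Prod.map f id p, p.1)) := by
  rw [compProd_compProd_prodMkRight_comm, compProd_map_condDistrib aemeasurable_id,
    map_compProd P (by fun_prop), Measure.map_map (by fun_prop) (by fun_prop)]
  rfl

lemma rnDeriv_compProd_right [MeasurableSpace.CountableOrCountablyGenerated α β]
    {P : Measure α} [IsFiniteMeasure P] {κ η : Kernel α β}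
    [IsFiniteKernel κ] [IsFiniteKernel η] (h_ac : P ⊗ₘ κ ≪ P ⊗ₘ η) :
    (P ⊗ₘ κ).rnDeriv (P ⊗ₘ η) =ᵐ[P ⊗ₘ η] fun p => κ.rnDeriv η p.1 p.2 := by
  have κ_eq : κ =ᵐ[P] η.withDensity (κ.rnDeriv η) := by
    filter_upwards [h_ac.kernel_of_compProd] with a ha using (Kernel.withDensity_rnDeriv_eq ha).symm
  rw [Measure.compProd_congr κ_eq, Measure.compProd_withDensity (by fun_prop)]
  exact Measure.rnDeriv_withDensity _ (by fun_prop)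

end CompProd

section KLDiv

variable {α β γ : Type*} [MeasurableSpace α] [MeasurableSpace β] [MeasurableSpace γ]

lemma klDiv_eq_informationTheory_klDiv {μ ν : Measure α} (h : μ .univ = ν .univ) :
    klDiv μ ν = InformationTheory.klDiv μ ν := by
  simp [klDiv, InformationTheory.klDiv_def, measureReal_def, h]

lemma klDiv_map_of_leftInverse (μ ν : Measure α) [IsFiniteMeasure μ] [IsFiniteMeasure ν]
    {g : α → β} {h : β → α} (hg : Measurable g) (hh : Measurable h)
    (hgh : Function.LeftInverse h g) :
    InformationTheory.klDiv (μ.map g) (ν.map g) = InformationTheory.klDiv μ ν := by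
  refine le_antisymm (InformationTheory.klDiv_map_le μ ν hg) ?_
  simpa [Measure.map_map hh hg, hgh.comp_eq_id] using
    InformationTheory.klDiv_map_le (μ.map g) (ν.map g) hh

section CompProdRight

variable [MeasurableSpace.CountableOrCountablyGenerated α β] {P : Measure α} {κ η : Kernel α β}
  [IsFiniteKernel κ] [IsFiniteKernel η]

lemma klDiv_compProd_right_of_ac [IsFiniteMeasure P] (h_ac : P ⊗ₘ κ ≪ P ⊗ₘ η) :
    InformationTheory.klDiv (P ⊗ₘ κ) (P ⊗ₘ η) =
      ∫⁻ a, InformationTheory.klDiv (κ a) (η a) ∂P := by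
  calc InformationTheory.klDiv (P ⊗ₘ κ) (P ⊗ₘ η)
  _ = ∫⁻ p, ENNReal.ofReal (InformationTheory.klFun (κ.rnDeriv η p.1 p.2).toReal) ∂(P ⊗ₘ η) := by
    rw [InformationTheory.klDiv_eq_lintegral_klFun_of_ac h_ac]
    refine lintegral_congr_ae ?_
    filter_upwards [rnDeriv_compProd_right h_ac] with p hp using by rw [hp]
  _ = ∫⁻ a, ∫⁻ b, ENNReal.ofReal (InformationTheory.klFun (κ.rnDeriv η a b).toReal) ∂(η a) ∂P :=
    Measure.lintegral_compProd (by fun_prop)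
  _ = ∫⁻ a, InformationTheory.klDiv (κ a) (η a) ∂P := by
    refine lintegral_congr_ae ?_
    filter_upwards [h_ac.kernel_of_compProd] with a ha
    rw [InformationTheory.klDiv_eq_lintegral_klFun_of_ac ha]
    refine lintegral_congr_ae ?_
    filter_upwards [Kernel.rnDeriv_eq_rnDeriv_measure (κ := κ) (η := η) (a := a)] with b hb
      using by rw [hb]

lemma lintegral_klDiv_eq_top_of_not_ae_ac (h : ¬ ∀ᵐ a ∂P, κ a ≪ η a) :
    ∫⁻ a, InformationTheory.klDiv (κ a) (η a) ∂P = ∞ := by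
  have hs : MeasurableSet {a | κ a ≪ η a}ᶜ := (Kernel.measurableSet_absolutelyContinuous κ η).compl
  rw [eq_top_iff]
  calc ∞
  _ = ∫⁻ _ in {a | κ a ≪ η a}ᶜ, ∞ ∂P := by
    rw [setLIntegral_const, ENNReal.top_mul (mt mem_ae_iff.2 h)]
  _ ≤ ∫⁻ a in {a | κ a ≪ η a}ᶜ, InformationTheory.klDiv (κ a) (η a) ∂P :=
    setLIntegral_mono' hs fun a ha => (InformationTheory.klDiv_of_not_ac ha).ge
  _ ≤ ∫⁻ a, InformationTheory.klDiv (κ a) (η a) ∂P := setLIntegral_le_lintegral _ _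

variable (P κ η) in
lemma klDiv_compProd_right [IsFiniteMeasure P] :
    InformationTheory.klDiv (P ⊗ₘ κ) (P ⊗ₘ η) =
      ∫⁻ a, InformationTheory.klDiv (κ a) (η a) ∂P := by
  by_cases h_ac : P ⊗ₘ κ ≪ P ⊗ₘ η
  · exact klDiv_compProd_right_of_ac h_ac
  · rw [InformationTheory.klDiv_of_not_ac h_ac, lintegral_klDiv_eq_top_of_not_ae_ac]
    exact mt Measure.absolutelyContinuous_compProd_right_iff.2 h_ac

end CompProdRight

lemma klDiv_compProd_comap_eq_add [StandardBorelSpace α] [Nonempty α]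
    (P : Measure α) [IsFiniteMeasure P] (π : Measure (α × γ)) [IsFiniteMeasure π]
    {f : α → β} (hf : Measurable f) (η ξ : Kernel β γ) [IsMarkovKernel η] [IsMarkovKernel ξ]
    (hπ : π.map (Prod.map f id) = P.map f ⊗ₘ η) :
    InformationTheory.klDiv π (P ⊗ₘ ξ.comap f hf) =
      InformationTheory.klDiv (P.map f ⊗ₘ η) (P.map f ⊗ₘ ξ) +
        InformationTheory.klDiv π (P ⊗ₘ η.comap f hf) := by
  let g : α × γ → (β × γ) × α := fun p => (Prod.map f id p, p.1)
  have klDiv_map_g (ρ : Measure (α × γ)) [IsFiniteMeasure ρ] :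
      InformationTheory.klDiv (π.map g) (ρ.map g) = InformationTheory.klDiv π ρ :=
    klDiv_map_of_leftInverse π ρ (h := fun q => (q.2, q.1.2)) (by fun_prop) (by fun_prop)
      fun _ => rfl
  have map_π : π.map g = (P.map f ⊗ₘ η) ⊗ₘ condDistrib Prod.fst (Prod.map f id) π := by
    rw [← hπ, compProd_map_condDistrib measurable_fst.aemeasurable]
  rw [← klDiv_map_g (P ⊗ₘ ξ.comap f hf), ← klDiv_map_g (P ⊗ₘ η.comap f hf),
    ← map_compProd_compProd_condDistrib P hf ξ, ← map_compProd_compProd_condDistrib P hf η, map_π,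
    InformationTheory.klDiv_compProd_eq_add]

end KLDiv

lemma mutualInfo_eq_klDiv_compProd_const {Ω 𝓧 𝓨 : Type*} [MeasurableSpace Ω] [MeasurableSpace 𝓧]
    [MeasurableSpace 𝓨] {μ : Measure Ω} [IsProbabilityMeasure μ] {X : Ω → 𝓧} {Y : Ω → 𝓨}
    (hX : AEMeasurable X μ) (hY : AEMeasurable Y μ) :
    mutualInfo μ Y X = InformationTheory.klDiv (μ.map fun ω => (X ω, Y ω))
      (μ.map X ⊗ₘ Kernel.const 𝓧 (μ.map Y)) := by
  have := Measure.isProbabilityMeasure_map hX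
  have := Measure.isProbabilityMeasure_map hY
  have := Measure.isProbabilityMeasure_map (hY.prodMk hX)
  rw [mutualInfo, klDiv_eq_informationTheory_klDiv (by simp only [measure_univ]),
    ← klDiv_map_of_leftInverse _ _ measurable_swap measurable_swap Prod.swap_swap,
    Measure.prod_swap, AEMeasurable.map_map_of_aemeasurable (by fun_prop) (hY.prodMk hX),
    Measure.compProd_const]
  rfl

end InformationLoss

open InformationLoss in
theorem information_loss_eq_expected_klDiv_general
    {Ω 𝓧 𝓨 𝓩 : Type*} [MeasurableSpace Ω]
    [MeasurableSpace 𝓧] [StandardBorelSpace 𝓧] [Nonempty 𝓧]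
    [MeasurableSpace 𝓨] [StandardBorelSpace 𝓨] [Nonempty 𝓨] [MeasurableSpace 𝓩]
    (μ : Measure Ω) [IsProbabilityMeasure μ] {X : Ω → 𝓧} {Y : Ω → 𝓨}
    (hX : AEMeasurable X μ) (hY : AEMeasurable Y μ) {f : 𝓧 → 𝓩} (hf : Measurable f) :
    mutualInfo μ Y X = mutualInfo μ Y (fun ω => f (X ω)) +
      ∫⁻ x, klDiv (condDistrib Y X μ x) (condDistrib Y (fun ω => f (X ω)) μ (f x)) ∂(μ.map X) := by
  set κ := condDistrib Y X μ
  set η := condDistrib Y (fun ω => f (X ω)) μ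
  have := Measure.isProbabilityMeasure_map hY
  have hfX : AEMeasurable (fun ω => f (X ω)) μ := hf.comp_aemeasurable hX
  have map_f : (μ.map X).map f = μ.map fun ω => f (X ω) :=
    AEMeasurable.map_map_of_aemeasurable hf.aemeasurable hX
  have law_XY : μ.map X ⊗ₘ κ = μ.map fun ω => (X ω, Y ω) := compProd_map_condDistrib hY
  have law_fXY : (μ.map fun ω => f (X ω)) ⊗ₘ η = μ.map fun ω => (f (X ω), Y ω) :=
    compProd_map_condDistrib hY
  have map_law_XY : (μ.map X ⊗ₘ κ).map (Prod.map f id) = (μ.map X).map f ⊗ₘ η := by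
    rw [law_XY, map_f, law_fXY,
      AEMeasurable.map_map_of_aemeasurable (by fun_prop) (hX.prodMk hY)]
    rfl
  have integrand_eq (x : 𝓧) : klDiv (κ x) (η (f x)) = InformationTheory.klDiv (κ x) (η (f x)) :=
    klDiv_eq_informationTheory_klDiv (by simp only [measure_univ])
  simp_rw [integrand_eq]
  rw [mutualInfo_eq_klDiv_compProd_const hX hY, mutualInfo_eq_klDiv_compProd_const hfX hY,
    ← law_XY, ← law_fXY, ← map_f]
  exact (klDiv_compProd_comap_eq_add _ _ hf η (Kernel.const 𝓩 (μ.map Y)) map_law_XY).trans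
    (congrArg _ (klDiv_compProd_right (μ.map X) κ (η.comap f hf)))

/-- Information loss is expected KL divergence: with `Z := φ(S)` and
`MI(S'; (S,O)) < ∞`, the information lost by compressing `S` through `φ` equals the expected KL
divergence between the true transition distribution `κ_{(s,o)}` (the regular conditional
distribution of `S'` given `(S,O) = (s,o)`) and the abstracted one `κ̃_{(φ(s),o)}` (the regular
conditional distribution of `S'` given `(Z,O) = (z,o)`):
`MI(S'; (S,O)) − MI(S'; (Z,O)) = ∫ klDiv(κ_{(s,o)}, κ̃_{(φ(s),o)}) dμ_{(S,O)}(s,o)`. -/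
theorem information_loss_eq_expected_klDiv
    {Ω 𝒮 𝒵 O : Type*} [MeasurableSpace Ω]
    [MeasurableSpace 𝒮] [StandardBorelSpace 𝒮] [Nonempty 𝒮]
    [MeasurableSpace 𝒵] [StandardBorelSpace 𝒵] [Nonempty 𝒵]
    [Fintype O] [MeasurableSpace O] [DiscreteMeasurableSpace O] [Nonempty O]
    (μ : Measure Ω) [IsProbabilityMeasure μ]
    (St : Ω → 𝒮) (Op : Ω → O) (S' : Ω → 𝒮)
    (hSt : Measurable St) (hOp : Measurable Op) (hS' : Measurable S')
    (φ : 𝒮 → 𝒵) (hφ : Measurable φ)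
    (hfin : mutualInfo μ S' (fun ω => (St ω, Op ω)) < ∞) :
    mutualInfo μ S' (fun ω => (St ω, Op ω)) -
        mutualInfo μ S' (fun ω => (φ (St ω), Op ω)) =
      ∫⁻ p, klDiv (condDistrib S' (fun ω => (St ω, Op ω)) μ p)
          (condDistrib S' (fun ω => (φ (St ω), Op ω)) μ (φ p.1, p.2))
        ∂(μ.map (fun ω => (St ω, Op ω))) :=
  ENNReal.sub_eq_of_eq_add_rev' hfin.ne <| information_loss_eq_expected_klDiv_general μ
    (hSt.prodMk hOp).aemeasurable hS'.aemeasurable (hφ.prodMap measurable_id)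
end

section
/- (Information loss lower-bounds transition error) Let (S, O, S') be random variables with S, S' valued in standard Borel spaces, O valued in a finite set, φ : S-space → Z-space measurable, and set Z := φ(S). Assume MI(S'; (S,O)) < ∞. Let κ_{(s,o)} be the regular conditional distribution of S' given (S,O) = (s,o) and κ̃_{(z,o)} that of S' given (Z,O) = (z,o). Then MI(S'; (S,O)) − MI(S'; (Z,O)) ≥ (1/2) · ∫ ‖κ_{(s,o)} − κ̃_{(φ(s),o)}‖₁² dμ_{(S,O)}(s,o); that is, the mutual information gap upper-bounds (up to the Pinsker constant 1/2 for natural-logarithm KL) the expected squared total-variation error of the abstracted transition dynamics. -/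
open MeasureTheory ProbabilityTheory
open scoped ENNReal

/-!
Let `P`, `Q` be finite measures and let `R` be `Q` reweighted by the density of `f_* P` with respect
to `f_* Q`, pulled back along `f`. Then `log (dP/dQ) = log (dP/dR) + log (d f_*P / d f_*Q) ∘ f`, and
integrating against `P` gives the Pythagorean identity `KL(P ‖ Q) = KL(f_* P ‖ f_* Q) + KL(P ‖ R)`.
For `P` the law of `(X, S)`, `Q` the product of its marginals and `f = ψ × id`, the measure `R` is
the law obtained by drawing `S` from its conditional distribution given `ψ(X)`. Hence the loss of
mutual information is exactly the mean of `KL(κ_x ‖ κ̃_{ψ(x)})`, and Pinsker's inequality bounds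
each of these divergences from below. Pinsker's inequality itself is Cauchy–Schwarz applied to the
scalar bound `3 (x - 1)² ≤ (2 x + 4) (x log x + 1 - x)`, whose two sides agree to second order at
`x = 1`.
-/

open InformationTheory (klFun klFun_one hasDerivAt_klFun)

section Pinsker

lemma convexOn_mul_klFun_sub_sq :
    ConvexOn ℝ (Set.Ici 0) fun x : ℝ ↦ (2 * x + 4) * klFun x - 3 * (x - 1) ^ 2 := by
  have hderiv : ∀ x ∈ Set.Ioi (0 : ℝ),
      HasDerivAt (fun x : ℝ ↦ (2 * x + 4) * klFun x - 3 * (x - 1) ^ 2)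
        (2 * klFun x + (2 * x + 4) * Real.log x - 6 * (x - 1)) x := fun x hx ↦ by
    convert! ((((hasDerivAt_id x).const_mul 2).add_const 4).mul
      (hasDerivAt_klFun (ne_of_gt hx))).sub
        ((((hasDerivAt_id x).sub_const 1).pow 2).const_mul 3) using 1
    simp only [mul_one, id_eq, Nat.cast_ofNat, Nat.add_one_sub_one, pow_one, sub_right_inj]
    ring
  have hderiv2 : ∀ x ∈ Set.Ioi (0 : ℝ),
      HasDerivAt (fun x : ℝ ↦ 2 * klFun x + (2 * x + 4) * Real.log x - 6 * (x - 1))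
        (4 * (Real.log x - (1 - x⁻¹))) x := fun x hx ↦ by
    have hx0 : x ≠ 0 := ne_of_gt hx
    convert! (((hasDerivAt_klFun hx0).const_mul 2).add
      ((((hasDerivAt_id x).const_mul 2).add_const 4).mul (Real.hasDerivAt_log hx0))).sub
        (((hasDerivAt_id x).sub_const 1).const_mul 6) using 1
    simp only [id]
    field_simp
    ring
  refine convexOn_of_hasDerivWithinAt2_nonneg (convex_Ici 0) (by fun_prop)
    (f' := fun x ↦ 2 * klFun x + (2 * x + 4) * Real.log x - 6 * (x - 1))
    (f'' := fun x ↦ 4 * (Real.log x - (1 - x⁻¹))) ?_ ?_ ?_ <;> rw [interior_Ici]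
  · exact fun x hx ↦ (hderiv x hx).hasDerivWithinAt
  · exact fun x hx ↦ (hderiv2 x hx).hasDerivWithinAt
  · exact fun x hx ↦ mul_nonneg zero_le_four (sub_nonneg.2 (Real.one_sub_inv_le_log_of_pos hx))

lemma three_mul_sq_sub_one_le_mul_klFun {x : ℝ} (hx : 0 ≤ x) :
    3 * (x - 1) ^ 2 ≤ (2 * x + 4) * klFun x := by
  have hderiv : HasDerivAt (fun x : ℝ ↦ (2 * x + 4) * klFun x - 3 * (x - 1) ^ 2) 0 1 := by
    convert! ((((hasDerivAt_id (1 : ℝ)).const_mul 2).add_const 4).mul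
      (hasDerivAt_klFun one_ne_zero)).sub
        ((((hasDerivAt_id (1 : ℝ)).sub_const 1).pow 2).const_mul 3) using 1
    simp [klFun_one]
  have hmin := convexOn_mul_klFun_sub_sq.isMinOn_of_rightDeriv_eq_zero (x := 1) (by simp)
    (hderiv.hasDerivWithinAt.derivWithin (uniqueDiffWithinAt_Ioi 1)) hx
  simpa [klFun_one] using hmin

variable {α : Type*} [MeasurableSpace α] {P Q : Measure α} [IsFiniteMeasure P] [IsFiniteMeasure Q]

lemma sq_lintegral_le_lintegral_mul_lintegral {μ : Measure α} {u v w : α → ℝ≥0∞}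
    (hv : AEMeasurable v μ) (hw : AEMeasurable w μ) (huvw : ∀ x, u x ^ 2 ≤ v x * w x) :
    (∫⁻ x, u x ∂μ) ^ 2 ≤ (∫⁻ x, v x ∂μ) * ∫⁻ x, w x ∂μ := by
  have hle (a b c : ℝ≥0∞) : a ≤ b ^ (2⁻¹ : ℝ) * c ^ (2⁻¹ : ℝ) ↔ a ^ 2 ≤ b * c := by
    rw [← ENNReal.mul_rpow_of_nonneg _ _ (by positivity), ENNReal.le_rpow_inv_iff two_pos,
      ENNReal.rpow_two]
  rw [← hle]
  calc ∫⁻ x, u x ∂μ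
    _ ≤ ∫⁻ x, v x ^ (2⁻¹ : ℝ) * w x ^ (2⁻¹ : ℝ) ∂μ :=
      lintegral_mono fun x ↦ (hle _ _ _).2 (huvw x)
    _ ≤ (∫⁻ x, v x ∂μ) ^ (2⁻¹ : ℝ) * (∫⁻ x, w x ∂μ) ^ (2⁻¹ : ℝ) :=
      ENNReal.lintegral_mul_norm_pow_le hv hw (by positivity) (by positivity) (by norm_num)

lemma integrable_toReal_rnDeriv_sub_one :
    Integrable (fun x ↦ (P.rnDeriv Q x).toReal - 1) Q :=
  Measure.integrable_toReal_rnDeriv.sub (integrable_const 1)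

lemma toSignedMeasure_sub_eq_withDensityᵥ_rnDeriv_sub_one (hPQ : P ≪ Q) :
    P.toSignedMeasure - Q.toSignedMeasure =
      Q.withDensityᵥ fun x ↦ (P.rnDeriv Q x).toReal - 1 := by
  ext s hs
  rw [withDensityᵥ_apply integrable_toReal_rnDeriv_sub_one hs,
    integral_sub Measure.integrable_toReal_rnDeriv.integrableOn (integrable_const 1).integrableOn,
    Measure.setIntegral_toReal_rnDeriv hPQ]
  simp [Measure.toSignedMeasure_apply, hs]

lemma tvDist_eq_toReal_lintegral_enorm_rnDeriv_sub_one (hPQ : P ≪ Q) :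
    tvDist P Q = (∫⁻ x, ‖(P.rnDeriv Q x).toReal - 1‖ₑ ∂Q).toReal := by
  rw [tvDist, dif_pos ⟨‹_›, ‹_›⟩, toSignedMeasure_sub_eq_withDensityᵥ_rnDeriv_sub_one hPQ,
    SignedMeasure.totalVariation_eq_variation,
    Measure.variation_withDensityᵥ integrable_toReal_rnDeriv_sub_one,
    withDensity_apply _ MeasurableSet.univ, Measure.restrict_univ]

lemma sq_lintegral_enorm_rnDeriv_sub_one_le (hPQ : P ≪ Q) :
    (∫⁻ x, ‖(P.rnDeriv Q x).toReal - 1‖ₑ ∂Q) ^ 2 ≤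
      (2 * P Set.univ + 4 * Q Set.univ) / 3 * InformationTheory.klDiv P Q := by
  have hweight : ∫⁻ x, ENNReal.ofReal ((2 * (P.rnDeriv Q x).toReal + 4) / 3) ∂Q =
      (2 * P Set.univ + 4 * Q Set.univ) / 3 := by
    have hae : ∀ᵐ x ∂Q, ENNReal.ofReal ((2 * (P.rnDeriv Q x).toReal + 4) / 3) =
        (2 * P.rnDeriv Q x + 4) * 3⁻¹ := by
      filter_upwards [P.rnDeriv_lt_top Q] with x hx
      rw [ENNReal.ofReal_div_of_pos three_pos, ENNReal.ofReal_add (by positivity) (by positivity),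
        ENNReal.ofReal_mul zero_le_two, ENNReal.ofReal_toReal hx.ne, ENNReal.div_eq_inv_mul,
        mul_comm]
      simp
    rw [lintegral_congr_ae hae, lintegral_mul_const _ (by fun_prop),
      lintegral_add_right _ measurable_const, lintegral_const_mul _ (by fun_prop),
      Measure.lintegral_rnDeriv hPQ, lintegral_const, div_eq_mul_inv]
  rw [InformationTheory.klDiv_eq_lintegral_klFun_of_ac hPQ, ← hweight]
  refine sq_lintegral_le_lintegral_mul_lintegral (by fun_prop) (by fun_prop) fun x ↦ ?_
  rw [Real.enorm_eq_ofReal_abs, ← ENNReal.ofReal_pow (abs_nonneg _), sq_abs,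
    ← ENNReal.ofReal_mul (by positivity)]
  gcongr
  linarith [three_mul_sq_sub_one_le_mul_klFun (x := (P.rnDeriv Q x).toReal) (by positivity)]

theorem half_mul_sq_tvDist_le_klDiv (P Q : Measure α) [IsProbabilityMeasure P]
    [IsProbabilityMeasure Q] :
    1 / 2 * ENNReal.ofReal (tvDist P Q ^ 2) ≤ InformationTheory.klDiv P Q := by
  by_cases hPQ : P ≪ Q
  swap
  · simp [hPQ]
  have hsq := sq_lintegral_enorm_rnDeriv_sub_one_le hPQ
  have hconst : (2 * P Set.univ + 4 * Q Set.univ) / 3 = 2 := by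
    simp only [measure_univ, mul_one]
    exact ((ENNReal.eq_div_iff three_ne_zero ENNReal.ofNat_ne_top).2 (by norm_num)).symm
  have hfin := integrable_toReal_rnDeriv_sub_one (P := P) (Q := Q).2.ne
  rw [tvDist_eq_toReal_lintegral_enorm_rnDeriv_sub_one hPQ,
    ENNReal.ofReal_pow ENNReal.toReal_nonneg, ENNReal.ofReal_toReal hfin, one_div,
    ENNReal.inv_mul_le_iff two_ne_zero ENNReal.ofNat_ne_top]
  rwa [hconst] at hsq

end Pinsker

section CompProd

variable {α β : Type*} [MeasurableSpace α] [MeasurableSpace β]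
  [MeasurableSpace.CountableOrCountablyGenerated α β] {κ η : Kernel α β} [IsFiniteKernel κ]
  [IsFiniteKernel η]

lemma compProd_eq_withDensity_rnDeriv {ρ : Measure α} [SFinite ρ] (hκη : ∀ᵐ a ∂ρ, κ a ≪ η a) :
    ρ ⊗ₘ κ = (ρ ⊗ₘ η).withDensity fun p ↦ κ.rnDeriv η p.1 p.2 := by
  have hκ : ∀ᵐ a ∂ρ, κ a = η.withDensity (κ.rnDeriv η) a := by
    filter_upwards [hκη] with a ha using (Kernel.withDensity_rnDeriv_eq ha).symm
  rw [Measure.compProd_congr hκ, Measure.compProd_withDensity (Kernel.measurable_rnDeriv κ η)]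

lemma klDiv_compProd_of_ae_absolutelyContinuous {ρ : Measure α} [IsFiniteMeasure ρ]
    (hκη : ∀ᵐ a ∂ρ, κ a ≪ η a) :
    InformationTheory.klDiv (ρ ⊗ₘ κ) (ρ ⊗ₘ η) =
      ∫⁻ a, InformationTheory.klDiv (κ a) (η a) ∂ρ := by
  have hrnDeriv : (ρ ⊗ₘ κ).rnDeriv (ρ ⊗ₘ η) =ᵐ[ρ ⊗ₘ η] fun p ↦ κ.rnDeriv η p.1 p.2 := by
    rw [compProd_eq_withDensity_rnDeriv hκη]
    exact Measure.rnDeriv_withDensity _ (Kernel.measurable_rnDeriv κ η)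
  calc InformationTheory.klDiv (ρ ⊗ₘ κ) (ρ ⊗ₘ η)
    _ = ∫⁻ p, ENNReal.ofReal (klFun ((ρ ⊗ₘ κ).rnDeriv (ρ ⊗ₘ η) p).toReal) ∂(ρ ⊗ₘ η) :=
      InformationTheory.klDiv_eq_lintegral_klFun_of_ac
        (Measure.AbsolutelyContinuous.compProd_right hκη)
    _ = ∫⁻ p, ENNReal.ofReal (klFun (κ.rnDeriv η p.1 p.2).toReal) ∂(ρ ⊗ₘ η) :=
      lintegral_congr_ae <| hrnDeriv.fun_comp fun r ↦ ENNReal.ofReal (klFun r.toReal)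
    _ = ∫⁻ a, ∫⁻ b, ENNReal.ofReal (klFun (κ.rnDeriv η a b).toReal) ∂(η a) ∂ρ :=
      Measure.lintegral_compProd (by fun_prop)
    _ = ∫⁻ a, InformationTheory.klDiv (κ a) (η a) ∂ρ := by
      refine lintegral_congr_ae ?_
      filter_upwards [hκη] with a ha
      rw [InformationTheory.klDiv_eq_lintegral_klFun_of_ac ha]
      exact lintegral_congr_ae <|
        Kernel.rnDeriv_eq_rnDeriv_measure.fun_comp fun r ↦ ENNReal.ofReal (klFun r.toReal)

theorem klDiv_compProd_eq_lintegral_klDiv (ρ : Measure α) [IsFiniteMeasure ρ] (κ η : Kernel α β)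
    [IsFiniteKernel κ] [IsFiniteKernel η] :
    InformationTheory.klDiv (ρ ⊗ₘ κ) (ρ ⊗ₘ η) =
      ∫⁻ a, InformationTheory.klDiv (κ a) (η a) ∂ρ := by
  by_cases hκη : ∀ᵐ a ∂ρ, κ a ≪ η a
  · exact klDiv_compProd_of_ae_absolutelyContinuous hκη
  have hnull : ρ {a | κ a ≪ η a}ᶜ ≠ 0 := hκη
  have htop : ∞ * ρ {a | κ a ≪ η a}ᶜ ≤ ∫⁻ a, InformationTheory.klDiv (κ a) (η a) ∂ρ := by
    rw [← setLIntegral_const]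
    refine (setLIntegral_mono' (Kernel.measurableSet_absolutelyContinuous κ η).compl
      fun a ha ↦ ?_).trans (setLIntegral_le_lintegral _ _)
    exact (InformationTheory.klDiv_of_not_ac ha).ge
  rw [InformationTheory.klDiv_of_not_ac
    (Measure.absolutelyContinuous_compProd_right_iff.not.2 hκη)]
  rwa [ENNReal.top_mul hnull, top_le_iff, eq_comm] at htop

end CompProd

section Pythagoras

variable {α β : Type*} [MeasurableSpace α] [MeasurableSpace β] {P Q : Measure α} {f : α → β}
  {g : β → ℝ≥0∞}

lemma absolutelyContinuous_withDensity_comp (hPQ : P ≪ Q) (hf : Measurable f) (hg : Measurable g)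
    (hmap : P.map f = (Q.map f).withDensity g) : P ≪ Q.withDensity (g ∘ f) := by
  have hne : ∀ᵐ x ∂P, g (f x) ≠ 0 := by
    refine ae_of_ae_map hf.aemeasurable (p := fun y ↦ g y ≠ 0) ?_
    rw [hmap, ae_withDensity_iff hg]
    exact ae_of_all _ fun _ ↦ id
  refine Measure.AbsolutelyContinuous.mk fun s _ hs ↦ ?_
  rw [withDensity_apply_eq_zero (hg.comp hf)] at hs
  refine measure_mono_null_ae ?_ (hPQ hs)
  filter_upwards [hne] with x hx hxs using ⟨hx, hxs⟩

lemma withDensity_comp_univ (hf : Measurable f) (hg : Measurable g)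
    (hmap : P.map f = (Q.map f).withDensity g) :
    Q.withDensity (g ∘ f) Set.univ = P Set.univ := by
  calc Q.withDensity (g ∘ f) Set.univ
    _ = ∫⁻ x, g (f x) ∂Q := by simp
    _ = (Q.map f).withDensity g Set.univ := by simp [lintegral_map hg hf]
    _ = P Set.univ := by rw [← hmap, Measure.map_apply hf .univ, Set.preimage_univ]

variable [IsFiniteMeasure P]

lemma isFiniteMeasure_withDensity_comp (hf : Measurable f) (hg : Measurable g)
    (hmap : P.map f = (Q.map f).withDensity g) : IsFiniteMeasure (Q.withDensity (g ∘ f)) :=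
  ⟨by rw [withDensity_comp_univ hf hg hmap]; exact measure_lt_top P _⟩

variable [IsFiniteMeasure Q]

lemma llr_eq_llr_withDensity_comp_add_llr_map (hPQ : P ≪ Q) (hf : Measurable f)
    (hg : Measurable g) (hmap : P.map f = (Q.map f).withDensity g) :
    llr P Q =ᵐ[P] fun x ↦
      llr P (Q.withDensity (g ∘ f)) x + llr (P.map f) (Q.map f) (f x) := by
  have := isFiniteMeasure_withDensity_comp hf hg hmap
  have hPR := absolutelyContinuous_withDensity_comp hPQ hf hg hmap
  have hmap_rnDeriv : ∀ᵐ x ∂Q, (P.map f).rnDeriv (Q.map f) (f x) = g (f x) := by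
    refine ae_of_ae_map hf.aemeasurable (p := fun y ↦ (P.map f).rnDeriv (Q.map f) y = g y) ?_
    rw [hmap]
    exact Measure.rnDeriv_withDensity _ hg
  filter_upwards [hPQ.ae_le (Measure.rnDeriv_mul_rnDeriv hPR (κ := Q)),
    hPQ.ae_le (Q.rnDeriv_withDensity (hg.comp hf)), hPQ.ae_le hmap_rnDeriv,
    Measure.rnDeriv_pos hPQ, hPQ.ae_le (P.rnDeriv_lt_top Q)]
    with x hchain hdens hmap_x hpos hlt
  have hprod : P.rnDeriv Q x =
      P.rnDeriv (Q.withDensity (g ∘ f)) x * (P.map f).rnDeriv (Q.map f) (f x) := by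
    rw [← hchain, Pi.mul_apply, hdens, hmap_x, Function.comp_apply]
  have hne : (P.rnDeriv Q x).toReal ≠ 0 := (ENNReal.toReal_pos hpos.ne' hlt.ne).ne'
  rw [hprod, ENNReal.toReal_mul] at hne
  simp only [llr]
  rw [hprod, ENNReal.toReal_mul, Real.log_mul (left_ne_zero_of_mul hne) (right_ne_zero_of_mul hne)]

lemma integrable_llr_iff_integrable_llr_map_and_withDensity_comp (hPQ : P ≪ Q)
    (hf : Measurable f) (hg : Measurable g) (hmap : P.map f = (Q.map f).withDensity g) :
    Integrable (llr P Q) P ↔ Integrable (llr (P.map f) (Q.map f)) (P.map f) ∧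
      Integrable (llr P (Q.withDensity (g ∘ f))) P := by
  have hllr := llr_eq_llr_withDensity_comp_add_llr_map hPQ hf hg hmap
  have hcomp : Integrable (llr (P.map f) (Q.map f)) (P.map f) →
      Integrable (fun x ↦ llr (P.map f) (Q.map f) (f x)) P := fun h ↦ h.comp_measurable hf
  constructor
  · intro hint
    have hint_map := InformationTheory.integrable_llr_map hPQ hf hint
    refine ⟨hint_map, (hint.sub (hcomp hint_map)).congr ?_⟩
    filter_upwards [hllr] with x hx
    simp [hx]
  · rintro ⟨hint_map, hint_R⟩
    exact (hint_R.add (hcomp hint_map)).congr hllr.symm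

theorem klDiv_eq_klDiv_map_add_klDiv_withDensity_comp (hf : Measurable f) (hg : Measurable g)
    (hmap : P.map f = (Q.map f).withDensity g) :
    InformationTheory.klDiv P Q = InformationTheory.klDiv (P.map f) (Q.map f) +
      InformationTheory.klDiv P (Q.withDensity (g ∘ f)) := by
  by_cases hPQ : P ≪ Q
  swap
  · have hPR : ¬ P ≪ Q.withDensity (g ∘ f) :=
      fun h ↦ hPQ (h.trans (withDensity_absolutelyContinuous _ _))
    simp [hPQ, hPR]
  have := isFiniteMeasure_withDensity_comp hf hg hmap
  have hPR := absolutelyContinuous_withDensity_comp hPQ hf hg hmap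
  have hiff := integrable_llr_iff_integrable_llr_map_and_withDensity_comp hPQ hf hg hmap
  by_cases hint : Integrable (llr P Q) P
  swap
  · rw [InformationTheory.klDiv_of_not_integrable hint, eq_comm, ENNReal.add_eq_top,
      InformationTheory.klDiv_eq_top_iff, InformationTheory.klDiv_eq_top_iff]
    tauto
  obtain ⟨hint_map, hint_R⟩ := hiff.1 hint
  have hmass : (Q.withDensity (g ∘ f)).real Set.univ = P.real Set.univ := by
    rw [Measure.real, withDensity_comp_univ hf hg hmap, Measure.real]
  have hintegral : ∫ x, llr P Q x ∂P = ∫ x, llr P (Q.withDensity (g ∘ f)) x ∂P +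
      ∫ y, llr (P.map f) (Q.map f) y ∂(P.map f) := by
    rw [integral_map hf.aemeasurable (by fun_prop),
      integral_congr_ae (llr_eq_llr_withDensity_comp_add_llr_map hPQ hf hg hmap)]
    exact integral_add hint_R (hint_map.comp_measurable hf)
  rw [InformationTheory.klDiv_of_ac_of_integrable hPQ hint,
    InformationTheory.klDiv_of_ac_of_integrable (hPQ.map hf) hint_map,
    InformationTheory.klDiv_of_ac_of_integrable hPR hint_R,
    ← ENNReal.ofReal_add
      (InformationTheory.integral_llr_add_sub_measure_univ_nonneg (hPQ.map hf) hint_map)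
      (InformationTheory.integral_llr_add_sub_measure_univ_nonneg hPR hint_R),
    hintegral, hmass, map_measureReal_apply hf .univ, map_measureReal_apply hf .univ,
    Set.preimage_univ]
  ring_nf

end Pythagoras

section Comap

variable {𝓧 𝓨 𝓢 : Type*} [MeasurableSpace 𝓧] [MeasurableSpace 𝓨] [MeasurableSpace 𝓢]
  {ρ : Measure 𝓧} {ψ : 𝓧 → 𝓨} {κ : Kernel 𝓧 𝓢} {θ η : Kernel 𝓨 𝓢}

lemma map_prodMap_compProd_comap [SFinite ρ] [IsSFiniteKernel θ] (hψ : Measurable ψ) :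
    (ρ ⊗ₘ θ.comap ψ hψ).map (Prod.map ψ id) = ρ.map ψ ⊗ₘ θ := by
  have hψ_id : Measurable (Prod.map ψ (id : 𝓢 → 𝓢)) := hψ.prodMap measurable_id
  ext s hs
  rw [Measure.map_apply hψ_id hs, Measure.compProd_apply (hψ_id hs), Measure.compProd_apply hs,
    lintegral_map (Kernel.measurable_kernel_prodMk_left hs) hψ]
  rfl

lemma withDensity_comap [IsSFiniteKernel η] {g : 𝓨 → 𝓢 → ℝ≥0∞}
    (hg : Measurable (Function.uncurry g)) (hψ : Measurable ψ) :
    (η.comap ψ hψ).withDensity (fun x ↦ g (ψ x)) = (η.withDensity g).comap ψ hψ := by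
  have hgψ : Measurable (Function.uncurry fun x ↦ g (ψ x)) :=
    hg.comp (hψ.prodMap measurable_id)
  ext1 x
  simp only [Kernel.withDensity_apply _ hg, Kernel.withDensity_apply _ hgψ, Kernel.comap_apply]

variable [MeasurableSpace.CountablyGenerated 𝓢] [IsFiniteKernel θ] [IsFiniteKernel η]

lemma compProd_comap_eq_withDensity_rnDeriv_comp [SFinite ρ] (hψ : Measurable ψ)
    (hθη : ∀ᵐ y ∂(ρ.map ψ), θ y ≪ η y) :
    ρ ⊗ₘ θ.comap ψ hψ = (ρ ⊗ₘ η.comap ψ hψ).withDensity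
      ((fun p : 𝓨 × 𝓢 ↦ θ.rnDeriv η p.1 p.2) ∘ Prod.map ψ id) := by
  have hmeas : Measurable fun p : 𝓨 × 𝓢 ↦ θ.rnDeriv η p.1 p.2 := Kernel.measurable_rnDeriv θ η
  have hmeas_comp : Measurable (Function.uncurry fun x ↦ θ.rnDeriv η (ψ x)) :=
    hmeas.comp (hψ.prodMap measurable_id)
  have hθ : ∀ᵐ x ∂ρ, θ.comap ψ hψ x = (η.withDensity (θ.rnDeriv η)).comap ψ hψ x := by
    filter_upwards [ae_of_ae_map hψ.aemeasurable hθη] with x hx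
    rw [Kernel.comap_apply, Kernel.comap_apply, Kernel.withDensity_rnDeriv_eq hx]
  have hcomap := withDensity_comap (η := η) hmeas hψ
  have : IsSFiniteKernel ((η.comap ψ hψ).withDensity fun x ↦ θ.rnDeriv η (ψ x)) := by
    rw [hcomap]; infer_instance
  rw [Measure.compProd_congr hθ, ← hcomap, Measure.compProd_withDensity hmeas_comp]
  rfl

theorem klDiv_compProd_comap_eq_add [IsFiniteMeasure ρ] [IsFiniteKernel κ] (hψ : Measurable ψ)
    (hκθ : (ρ ⊗ₘ κ).map (Prod.map ψ id) = ρ.map ψ ⊗ₘ θ) :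
    InformationTheory.klDiv (ρ ⊗ₘ κ) (ρ ⊗ₘ η.comap ψ hψ) =
      InformationTheory.klDiv (ρ.map ψ ⊗ₘ θ) (ρ.map ψ ⊗ₘ η) +
        InformationTheory.klDiv (ρ ⊗ₘ κ) (ρ ⊗ₘ θ.comap ψ hψ) := by
  have hψ_id : Measurable (Prod.map ψ (id : 𝓢 → 𝓢)) := hψ.prodMap measurable_id
  have hη := map_prodMap_compProd_comap (ρ := ρ) (θ := η) hψ
  by_cases hθη : ∀ᵐ y ∂(ρ.map ψ), θ y ≪ η y
  · rw [compProd_comap_eq_withDensity_rnDeriv_comp hψ hθη, ← hκθ, ← hη]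
    refine klDiv_eq_klDiv_map_add_klDiv_withDensity_comp hψ_id (Kernel.measurable_rnDeriv θ η) ?_
    rw [hκθ, hη, compProd_eq_withDensity_rnDeriv hθη]
  · have htop : InformationTheory.klDiv (ρ.map ψ ⊗ₘ θ) (ρ.map ψ ⊗ₘ η) = ∞ :=
      InformationTheory.klDiv_of_not_ac (Measure.absolutelyContinuous_compProd_right_iff.not.2 hθη)
    have hle := InformationTheory.klDiv_map_le (ρ ⊗ₘ κ) (ρ ⊗ₘ η.comap ψ hψ) hψ_id
    rw [hκθ, hη, htop, top_le_iff] at hle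
    rw [hle, htop, top_add]

end Comap

section MutualInfo

/-- Mathlib's divergence carries the correction term `Q univ - P univ`, which `klDiv` omits. -/
lemma klDiv_eq_informationTheory_klDiv {α : Type*} [MeasurableSpace α] {P Q : Measure α}
    (hmass : P Set.univ = Q Set.univ) : klDiv P Q = InformationTheory.klDiv P Q := by
  by_cases h : P ≪ Q ∧ Integrable (llr P Q) P
  · rw [klDiv, if_pos h, InformationTheory.klDiv_of_ac_of_integrable h.1 h.2, Measure.real,
      Measure.real, hmass, add_sub_cancel_right]
  · rw [klDiv, if_neg h, eq_comm, ← not_ne_iff, InformationTheory.klDiv_ne_top_iff]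
    exact h

lemma klDiv_map_of_leftInverse {α β : Type*} [MeasurableSpace α] [MeasurableSpace β]
    (P Q : Measure α) [IsFiniteMeasure P] [IsFiniteMeasure Q] {f : α → β} {g : β → α}
    (hf : Measurable f) (hg : Measurable g) (hgf : Function.LeftInverse g f) :
    InformationTheory.klDiv (P.map f) (Q.map f) = InformationTheory.klDiv P Q := by
  refine (InformationTheory.klDiv_map_le P Q hf).antisymm ?_
  simpa only [Measure.map_map hg hf, hgf.comp_eq_id, Measure.map_id] using
    InformationTheory.klDiv_map_le (P.map f) (Q.map f) hg

variable {Ω 𝓧 𝓨 𝓢 : Type*} [MeasurableSpace Ω] [MeasurableSpace 𝓧] [MeasurableSpace 𝓨]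
  [MeasurableSpace 𝓢] {μ : Measure Ω} [IsProbabilityMeasure μ] {X : Ω → 𝓧} {S : Ω → 𝓢}
  {ψ : 𝓧 → 𝓨}

lemma mutualInfo_eq_klDiv_map_swap (hS : Measurable S) (hX : Measurable X) :
    mutualInfo μ S X = InformationTheory.klDiv (μ.map fun ω ↦ (X ω, S ω))
      ((μ.map X).prod (μ.map S)) := by
  have hX_prob := Measure.isProbabilityMeasure_map (μ := μ) hX.aemeasurable
  have hS_prob := Measure.isProbabilityMeasure_map (μ := μ) hS.aemeasurable
  have hSX_prob := Measure.isProbabilityMeasure_map (μ := μ) (hS.prodMk hX).aemeasurable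
  rw [mutualInfo, klDiv_eq_informationTheory_klDiv (by simp only [measure_univ]),
    ← klDiv_map_of_leftInverse _ _ measurable_swap measurable_swap Prod.swap_leftInverse,
    Measure.map_map measurable_swap (hS.prodMk hX), Measure.prod_swap]
  rfl

lemma mutualInfo_comp_le (hS : Measurable S) (hX : Measurable X) (hψ : Measurable ψ) :
    mutualInfo μ S (fun ω ↦ ψ (X ω)) ≤ mutualInfo μ S X := by
  have hψ_id : Measurable (Prod.map ψ (id : 𝓢 → 𝓢)) := hψ.prodMap measurable_id
  have hψX : Measurable fun ω ↦ ψ (X ω) := hψ.comp hX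
  have hle := InformationTheory.klDiv_map_le (μ.map fun ω ↦ (X ω, S ω))
    ((μ.map X).prod (μ.map S)) hψ_id
  rw [← Measure.map_prod_map _ _ hψ measurable_id, Measure.map_map hψ_id (hX.prodMk hS),
    Measure.map_map hψ hX, Measure.map_id] at hle
  rwa [mutualInfo_eq_klDiv_map_swap hS hX, mutualInfo_eq_klDiv_map_swap hS hψX]

variable [StandardBorelSpace 𝓢] [Nonempty 𝓢]

lemma mutualInfo_eq_klDiv_compProd_condDistrib (hS : Measurable S) (hX : Measurable X) :
    mutualInfo μ S X = InformationTheory.klDiv (μ.map X ⊗ₘ condDistrib S X μ)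
      (μ.map X ⊗ₘ Kernel.const 𝓧 (μ.map S)) := by
  rw [mutualInfo_eq_klDiv_map_swap hS hX, compProd_map_condDistrib hS.aemeasurable,
    Measure.compProd_const]

theorem mutualInfo_eq_mutualInfo_comp_add_lintegral_klDiv_condDistrib (hS : Measurable S)
    (hX : Measurable X) (hψ : Measurable ψ) :
    mutualInfo μ S X = mutualInfo μ S (fun ω ↦ ψ (X ω)) +
      ∫⁻ x, InformationTheory.klDiv (condDistrib S X μ x)
        (condDistrib S (fun ω ↦ ψ (X ω)) μ (ψ x)) ∂(μ.map X) := by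
  have hψ_id : Measurable (Prod.map ψ (id : 𝓢 → 𝓢)) := hψ.prodMap measurable_id
  have hψX : (μ.map X).map ψ = μ.map fun ω ↦ ψ (X ω) := Measure.map_map hψ hX
  have hlaw : (μ.map X ⊗ₘ condDistrib S X μ).map (Prod.map ψ id) =
      (μ.map X).map ψ ⊗ₘ condDistrib S (fun ω ↦ ψ (X ω)) μ := by
    rw [hψX, compProd_map_condDistrib hS.aemeasurable, compProd_map_condDistrib hS.aemeasurable,
      Measure.map_map hψ_id (hX.prodMk hS)]
    rfl
  rw [mutualInfo_eq_klDiv_compProd_condDistrib hS hX,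
    mutualInfo_eq_klDiv_compProd_condDistrib hS (X := fun ω ↦ ψ (X ω)) (hψ.comp hX), ← hψX]
  refine (klDiv_compProd_comap_eq_add (η := Kernel.const 𝓨 (μ.map S)) hψ hlaw).trans ?_
  rw [klDiv_compProd_eq_lintegral_klDiv _ _ (Kernel.comap _ ψ hψ)]
  rfl

theorem information_loss_ge_expected_sq_tv_general (hS : Measurable S) (hX : Measurable X)
    (hψ : Measurable ψ) (hfin : mutualInfo μ S (fun ω ↦ ψ (X ω)) < ∞) :
    mutualInfo μ S X - mutualInfo μ S (fun ω ↦ ψ (X ω)) ≥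
      (1 / 2) * ∫⁻ x, ENNReal.ofReal (tvDist (condDistrib S X μ x)
        (condDistrib S (fun ω ↦ ψ (X ω)) μ (ψ x)) ^ 2) ∂(μ.map X) := by
  rw [mutualInfo_eq_mutualInfo_comp_add_lintegral_klDiv_condDistrib hS hX hψ,
    ENNReal.add_sub_cancel_left hfin.ne, ge_iff_le, ← lintegral_const_mul' _ _ (by simp)]
  exact lintegral_mono fun x ↦ half_mul_sq_tvDist_le_klDiv _ _

end MutualInfo

/-- Information loss lower-bounds transition error: with `Z := φ(S)` and
`MI(S'; (S,O)) < ∞`, the mutual information gap upper-bounds (up to the Pinsker constant `1/2`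
for natural-logarithm KL) the expected squared total-variation error of the abstracted
transition dynamics:
`MI(S'; (S,O)) − MI(S'; (Z,O)) ≥ (1/2) ∫ ‖κ_{(s,o)} − κ̃_{(φ(s),o)}‖₁² dμ_{(S,O)}(s,o)`. -/
theorem information_loss_ge_expected_sq_tv
    {Ω 𝒮 𝒵 O : Type*} [MeasurableSpace Ω]
    [MeasurableSpace 𝒮] [StandardBorelSpace 𝒮] [Nonempty 𝒮]
    [MeasurableSpace 𝒵] [StandardBorelSpace 𝒵] [Nonempty 𝒵]
    [Fintype O] [MeasurableSpace O] [DiscreteMeasurableSpace O] [Nonempty O]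
    (μ : Measure Ω) [IsProbabilityMeasure μ]
    (St : Ω → 𝒮) (Op : Ω → O) (S' : Ω → 𝒮)
    (hSt : Measurable St) (hOp : Measurable Op) (hS' : Measurable S')
    (φ : 𝒮 → 𝒵) (hφ : Measurable φ)
    (hfin : mutualInfo μ S' (fun ω => (St ω, Op ω)) < ∞) :
    mutualInfo μ S' (fun ω => (St ω, Op ω)) -
        mutualInfo μ S' (fun ω => (φ (St ω), Op ω)) ≥
      (1 / 2) *
        ∫⁻ p, ENNReal.ofReal
            (tvDist (condDistrib S' (fun ω => (St ω, Op ω)) μ p)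
                (condDistrib S' (fun ω => (φ (St ω), Op ω)) μ (φ p.1, p.2)) ^ 2)
          ∂(μ.map (fun ω => (St ω, Op ω))) := by
  have hX : Measurable fun ω => (St ω, Op ω) := hSt.prodMk hOp
  have hψ : Measurable fun p : 𝒮 × O => (φ p.1, p.2) := by fun_prop
  have hloss := information_loss_ge_expected_sq_tv_general hS' hX hψ
    ((mutualInfo_comp_le hS' hX hψ).trans_lt hfin)
  exact hloss
end
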